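/- Let Γ be a group, R a Γ-graded ring, and P, Q ∈ 𝔐(R). There exist a Γ-graded division ring K and a homomorphism of Γ-graded rings φ : R → K such that P^φ is invertible over K and Q^φ is not invertible over K, if and only if no matrix of the form (P ⊕ ⋯ ⊕ P) ⊕ I_m (the diagonal sum of r ≥ 1 copies of P with an m×m identity matrix, m ≥ 0) can be expressed as an iterated determinantal sum of matrices each of which either is a square homogeneous matrix that is not gr-full, or has the form E(Q ⊕ A)F for some A ∈ 𝔐(R) (A possibly absent, i.e., EQF) and permutation matrices E, F of appropriate size. -/

import Mathlib

open Matrix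

universe u v w

section GradedDefs

variable {Γ : Type u} [Group Γ] {R : Type v} [Ring R]

/-- `A` is a homogeneous matrix of distribution `(α, β)`:
its `(i,j)` entry lies in `𝒜 (α i * (β j)⁻¹)`. -/
def IsHomog (𝒜 : Γ → AddSubgroup R) {m n : ℕ}
    (A : Matrix (Fin m) (Fin n) R) (α : Fin m → Γ) (β : Fin n → Γ) : Prop :=
  ∀ i j, A i j ∈ 𝒜 (α i * (β j)⁻¹)

/-- `A` is a homogeneous matrix for some distribution. -/
def IsHomogSq (𝒜 : Γ → AddSubgroup R) {m n : ℕ}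
    (A : Matrix (Fin m) (Fin n) R) : Prop :=
  ∃ (α : Fin m → Γ) (β : Fin n → Γ), IsHomog 𝒜 A α β

end GradedDefs

/-- Square matrices over `R` of arbitrary finite size. -/
abbrev SqMat (R : Type v) : Type v := Σ n : ℕ, Matrix (Fin n) (Fin n) R

section GradedDefs

variable {Γ : Type u} [Group Γ] {R : Type v} [Ring R]

/-- Diagonal sum `A ⊕ B` of two (rectangular) matrices. -/
def diagSum {m n m' n' : ℕ} (A : Matrix (Fin m) (Fin n) R)
    (B : Matrix (Fin m') (Fin n') R) : Matrix (Fin (m + m')) (Fin (n + n')) R :=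
  Matrix.reindex finSumFinEquiv finSumFinEquiv (Matrix.fromBlocks A 0 0 B)

/-- Block lower triangular matrix `[[A, 0], [C, B]]`. -/
def lowerBlockSum {n m : ℕ} (A : Matrix (Fin n) (Fin n) R) (B : Matrix (Fin m) (Fin m) R)
    (C : Matrix (Fin m) (Fin n) R) : Matrix (Fin (n + m)) (Fin (n + m)) R :=
  Matrix.reindex finSumFinEquiv finSumFinEquiv (Matrix.fromBlocks A 0 C B)

/-- Block upper triangular matrix `[[A, C], [0, B]]` with rectangular blocks. -/
def upperBlockSum {m n m' n' : ℕ} (A : Matrix (Fin m) (Fin n) R)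
    (B : Matrix (Fin m') (Fin n') R) (C : Matrix (Fin m) (Fin n') R) :
    Matrix (Fin (m + m')) (Fin (n + n')) R :=
  Matrix.reindex finSumFinEquiv finSumFinEquiv (Matrix.fromBlocks A C 0 B)

/-- `C` is the determinantal sum of `A` and `B` with respect to some column or row:
`A` and `B` agree away from that column (row) and the distinguished column (row) of `C`
is the sum of the corresponding columns (rows) of `A` and `B`. -/
def IsDetSum {n : ℕ} (A B C : Matrix (Fin n) (Fin n) R) : Prop :=
  (∃ c : Fin n, (∀ i j, j ≠ c → A i j = B i j) ∧
      ∀ i j, C i j = if j = c then A i j + B i j else A i j) ∨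
  (∃ r : Fin n, (∀ i j, i ≠ r → A i j = B i j) ∧
      ∀ i j, C i j = if i = r then A i j + B i j else A i j)

/-- `C` is the determinantal sum of the homogeneous matrices `A` and `B`
(which have a common distribution). -/
def GrDetSum (𝒜 : Γ → AddSubgroup R) {n : ℕ} (A B C : Matrix (Fin n) (Fin n) R) : Prop :=
  (∃ α β : Fin n → Γ, IsHomog 𝒜 A α β ∧ IsHomog 𝒜 B α β) ∧ IsDetSum A B C

/-- A square homogeneous matrix `A` is gr-full if whenever `A = P * Q` with `P`
homogeneous of distribution `(α, lam)` and `Q` homogeneous of distribution `(lam, β)`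
where `lam` has length `r`, then `r ≥ n`. -/
def IsGrFull (𝒜 : Γ → AddSubgroup R) {n : ℕ} (A : Matrix (Fin n) (Fin n) R) : Prop :=
  ∀ (r : ℕ) (P : Matrix (Fin n) (Fin r) R) (Q : Matrix (Fin r) (Fin n) R)
    (α : Fin n → Γ) (lam : Fin r → Γ) (β : Fin n → Γ),
    IsHomog 𝒜 P α lam → IsHomog 𝒜 Q lam β → A = P * Q → n ≤ r

/-- gr-prime matrix ideal: a set of square homogeneous matrices satisfying (PM1)–(PM6). -/
structure IsGrPrimeMatrixIdeal (𝒜 : Γ → AddSubgroup R) (P : Set (SqMat R)) : Prop where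
  subset_homog : ∀ p ∈ P, IsHomogSq 𝒜 p.2
  pm1 : ∀ {n : ℕ} (A : Matrix (Fin n) (Fin n) R),
    IsHomogSq 𝒜 A → ¬ IsGrFull 𝒜 A → (⟨n, A⟩ : SqMat R) ∈ P
  pm2 : ∀ {n : ℕ} (A B C : Matrix (Fin n) (Fin n) R),
    (⟨n, A⟩ : SqMat R) ∈ P → (⟨n, B⟩ : SqMat R) ∈ P → GrDetSum 𝒜 A B C →
    (⟨n, C⟩ : SqMat R) ∈ P
  pm3 : ∀ {m n : ℕ} (A : Matrix (Fin m) (Fin m) R) (B : Matrix (Fin n) (Fin n) R),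
    (⟨m, A⟩ : SqMat R) ∈ P → IsHomogSq 𝒜 B → (⟨m + n, diagSum A B⟩ : SqMat R) ∈ P
  pm4 : ∀ {m n : ℕ} (A : Matrix (Fin m) (Fin m) R) (B : Matrix (Fin n) (Fin n) R),
    IsHomogSq 𝒜 A → IsHomogSq 𝒜 B → (⟨m + n, diagSum A B⟩ : SqMat R) ∈ P →
    (⟨m, A⟩ : SqMat R) ∈ P ∨ (⟨n, B⟩ : SqMat R) ∈ P
  pm5 : (⟨1, (1 : Matrix (Fin 1) (Fin 1) R)⟩ : SqMat R) ∉ P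
  pm6 : ∀ {n : ℕ} (A : Matrix (Fin n) (Fin n) R) (e f : Equiv.Perm (Fin n)),
    (⟨n, A⟩ : SqMat R) ∈ P → (⟨n, A.submatrix ⇑e ⇑f⟩ : SqMat R) ∈ P

/-- gr-matrix ideal: a set of square homogeneous matrices satisfying (I1)–(I5). -/
structure IsGrMatrixIdeal (𝒜 : Γ → AddSubgroup R) (I : Set (SqMat R)) : Prop where
  subset_homog : ∀ p ∈ I, IsHomogSq 𝒜 p.2
  i1 : ∀ {n : ℕ} (A : Matrix (Fin n) (Fin n) R),
    IsHomogSq 𝒜 A → ¬ IsGrFull 𝒜 A → (⟨n, A⟩ : SqMat R) ∈ I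
  i2 : ∀ {n : ℕ} (A B C : Matrix (Fin n) (Fin n) R),
    (⟨n, A⟩ : SqMat R) ∈ I → (⟨n, B⟩ : SqMat R) ∈ I → GrDetSum 𝒜 A B C →
    (⟨n, C⟩ : SqMat R) ∈ I
  i3 : ∀ {m n : ℕ} (A : Matrix (Fin m) (Fin m) R) (B : Matrix (Fin n) (Fin n) R),
    (⟨m, A⟩ : SqMat R) ∈ I → IsHomogSq 𝒜 B → (⟨m + n, diagSum A B⟩ : SqMat R) ∈ I
  i4 : ∀ {n : ℕ} (A : Matrix (Fin n) (Fin n) R) (e f : Equiv.Perm (Fin n)),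
    (⟨n, A⟩ : SqMat R) ∈ I → (⟨n, A.submatrix ⇑e ⇑f⟩ : SqMat R) ∈ I
  i5 : ∀ {n : ℕ} (A : Matrix (Fin n) (Fin n) R),
    (⟨n + 1, diagSum A (1 : Matrix (Fin 1) (Fin 1) R)⟩ : SqMat R) ∈ I →
    (⟨n, A⟩ : SqMat R) ∈ I

/-- The diagonal sum of `r` copies of `A`. -/
def diagIter {n : ℕ} (A : Matrix (Fin n) (Fin n) R) :
    (r : ℕ) → Matrix (Fin (n * r)) (Fin (n * r)) R
  | 0 => 0
  | r + 1 => diagSum (diagIter A r) A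

/-- Iterated determinantal sums (with arbitrary bracketing) of elements of `W`. -/
inductive IsDetSumOf (𝒜 : Γ → AddSubgroup R) (W : Set (SqMat R)) : SqMat R → Prop
  | base (p : SqMat R) (hp : p ∈ W) : IsDetSumOf 𝒜 W p
  | step {n : ℕ} (A B C : Matrix (Fin n) (Fin n) R)
      (hA : IsDetSumOf 𝒜 W ⟨n, A⟩) (hB : IsDetSumOf 𝒜 W ⟨n, B⟩)
      (h : GrDetSum 𝒜 A B C) : IsDetSumOf 𝒜 W ⟨n, C⟩

/-- The homogeneous rational closure of degree `γ`: entries `(j,i)` of inverses of matrices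
`A^f` with `A ∈ Sig` homogeneous of distribution `(α, β)` and `β j * (α i)⁻¹ = γ`. -/
def RatCl (𝒜 : Γ → AddSubgroup R) {S : Type w} [Ring S] (Sig : Set (SqMat R)) (f : R →+* S)
    (γ : Γ) : Set S :=
  {x | ∃ (n : ℕ) (A : Matrix (Fin n) (Fin n) R) (α β : Fin n → Γ) (i j : Fin n)
        (B : Matrix (Fin n) (Fin n) S),
      (⟨n, A⟩ : SqMat R) ∈ Sig ∧ IsHomog 𝒜 A α β ∧ β j * (α i)⁻¹ = γ ∧
      (A.map ⇑f) * B = 1 ∧ B * (A.map ⇑f) = 1 ∧ B j i = x}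

/-- gr-lower semimultiplicative set of square homogeneous matrices. -/
def IsGrLowerSemimult (𝒜 : Γ → AddSubgroup R) (Sig : Set (SqMat R)) : Prop :=
  ((⟨1, (1 : Matrix (Fin 1) (Fin 1) R)⟩ : SqMat R) ∈ Sig) ∧
  ∀ {n m : ℕ} (A : Matrix (Fin n) (Fin n) R) (B : Matrix (Fin m) (Fin m) R)
    (α β : Fin n → Γ) (α' β' : Fin m → Γ) (C : Matrix (Fin m) (Fin n) R),
    (⟨n, A⟩ : SqMat R) ∈ Sig → (⟨m, B⟩ : SqMat R) ∈ Sig →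
    IsHomog 𝒜 A α β → IsHomog 𝒜 B α' β' → IsHomog 𝒜 C α' β →
    (⟨n + m, lowerBlockSum A B C⟩ : SqMat R) ∈ Sig

end GradedDefs

/-- A homomorphism of `Γ`-graded rings from `(R, 𝒜)` to a `Γ`-graded division ring. -/
structure GrDivRingHom (Γ : Type u) [Group Γ] [DecidableEq Γ] (R : Type v) [Ring R]
    (𝒜 : Γ → AddSubgroup R) where
  K : Type (max u v)
  [ringK : Ring K]
  [nontrivialK : Nontrivial K]
  grading : Γ → AddSubgroup K
  internal : DirectSum.IsInternal grading
  one_mem : (1 : K) ∈ grading 1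
  mul_mem : ∀ {γ δ : Γ} {x y : K}, x ∈ grading γ → y ∈ grading δ → x * y ∈ grading (γ * δ)
  isUnit_of_ne : ∀ {γ : Γ} {x : K}, x ∈ grading γ → x ≠ 0 → IsUnit x
  φ : R →+* K
  map_mem : ∀ {γ : Γ} {r : R}, r ∈ 𝒜 γ → φ r ∈ grading γ

attribute [instance] GrDivRingHom.ringK GrDivRingHom.nontrivialK

/-!
The homogeneous matrices that become singular over a graded division ring form a gr-prime matrix
ideal `I`. If `Q ∈ I` and `P ∉ I`, then `I` contains every determinantal sum of non-gr-full matrices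
and of matrices `E (Q ⊕ A) F`, but no `(P ⊕ ⋯ ⊕ P) ⊕ 1`, since its complement is closed under
diagonal sums.

Conversely, the determinantal sums in question form a gr-matrix pre-ideal. If it avoids all matrices
`(P ⊕ ⋯ ⊕ P) ⊕ 1`, then Zorn's lemma enlarges it to a pre-ideal that is maximal with this property,
and maximality makes it gr-prime. A gr-prime matrix ideal `I` gives rise to a graded division ring
by Malcolmson's construction: its homogeneous elements are formal fractions `f * A⁻¹ * x` with
`A ∉ I`, where `f` is a row and `x` a column, and such a fraction vanishes if and only if the
bordered matrix `[A, -x; f, 0]`, whose Schur complement it is, lies in `I`. The matrices outside `I`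
become invertible by construction. A matrix in `I` whose image were invertible would, up to
permutations, border a smaller one with invertible image, which lies outside `I` by induction; the
vanishing of the Schur complement then yields a nonzero vector in the kernel of the image.
-/

/-! ### Homogeneous matrices and determinantal sums -/

section Homogeneous

variable {Γ : Type u} [Group Γ] {R : Type v} [Ring R] {𝒜 : Γ → AddSubgroup R}
variable {ι κ τ ι' κ' : Type*}

/-- The family `𝒜` is multiplicative and contains `1` in degree `1`; together with a direct sum
decomposition this makes `R` a `Γ`-graded ring. (Mathlib's `SetLike.GradedMonoid` is restricted to
additively written grading monoids.) -/
class IsMulGraded (𝒜 : Γ → AddSubgroup R) : Prop where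
  one_mem : (1 : R) ∈ 𝒜 1
  mul_mem : ∀ {γ δ : Γ} {x y : R}, x ∈ 𝒜 γ → y ∈ 𝒜 δ → x * y ∈ 𝒜 (γ * δ)

/-- `A` is homogeneous of distribution `(α, β)`; this is `IsHomog` for arbitrary index types. -/
def HasDistribution (𝒜 : Γ → AddSubgroup R) (A : Matrix ι κ R) (α : ι → Γ) (β : κ → Γ) : Prop :=
  ∀ i j, A i j ∈ 𝒜 (α i * (β j)⁻¹)

namespace HasDistribution

variable {A B : Matrix ι κ R} {α : ι → Γ} {β : κ → Γ} {α' : ι' → Γ} {β' : κ' → Γ}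

lemma zero : HasDistribution 𝒜 (0 : Matrix ι κ R) α β := fun _ _ => zero_mem _

lemma one [IsMulGraded 𝒜] [DecidableEq ι] : HasDistribution 𝒜 (1 : Matrix ι ι R) α α := by
  intro i j
  rcases eq_or_ne i j with rfl | hij
  · simpa using IsMulGraded.one_mem (𝒜 := 𝒜)
  · simp [one_apply_ne hij]

lemma neg (hA : HasDistribution 𝒜 A α β) : HasDistribution 𝒜 (-A) α β :=
  fun i j => neg_mem (hA i j)

lemma add (hA : HasDistribution 𝒜 A α β) (hB : HasDistribution 𝒜 B α β) :
    HasDistribution 𝒜 (A + B) α β :=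
  fun i j => add_mem (hA i j) (hB i j)

lemma sub (hA : HasDistribution 𝒜 A α β) (hB : HasDistribution 𝒜 B α β) :
    HasDistribution 𝒜 (A - B) α β :=
  fun i j => sub_mem (hA i j) (hB i j)

lemma mul [IsMulGraded 𝒜] [Fintype τ] {lam : τ → Γ} {X : Matrix ι τ R} {Y : Matrix τ κ R}
    (hX : HasDistribution 𝒜 X α lam) (hY : HasDistribution 𝒜 Y lam β) :
    HasDistribution 𝒜 (X * Y) α β := by
  intro i j
  rw [mul_apply]
  refine sum_mem fun k _ => ?_
  simpa [mul_assoc] using IsMulGraded.mul_mem (hX i k) (hY k j)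

lemma submatrix (hA : HasDistribution 𝒜 A α β) (e : ι' → ι) (f : κ' → κ) :
    HasDistribution 𝒜 (A.submatrix e f) (α ∘ e) (β ∘ f) :=
  fun _ _ => hA _ _

lemma fromBlocks {B : Matrix ι κ' R} {C : Matrix ι' κ R} {D : Matrix ι' κ' R}
    (hA : HasDistribution 𝒜 A α β) (hB : HasDistribution 𝒜 B α β')
    (hC : HasDistribution 𝒜 C α' β) (hD : HasDistribution 𝒜 D α' β') :
    HasDistribution 𝒜 (fromBlocks A B C D) (Sum.elim α α') (Sum.elim β β') := by
  rintro (i | i) (j | j)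
  exacts [hA i j, hB i j, hC i j, hD i j]

lemma blockDiag {D : Matrix ι' κ' R} (hA : HasDistribution 𝒜 A α β)
    (hD : HasDistribution 𝒜 D α' β') :
    HasDistribution 𝒜 (Matrix.fromBlocks A 0 0 D) (Sum.elim α α') (Sum.elim β β') :=
  hA.fromBlocks zero zero hD

lemma mul_right (hA : HasDistribution 𝒜 A α β) (γ : Γ) :
    HasDistribution 𝒜 A (fun i => α i * γ) (fun j => β j * γ) :=
  fun i j => by simpa [mul_assoc] using hA i j

end HasDistribution

lemma IsHomogSq.diagSum {m n : ℕ} {A : Matrix (Fin m) (Fin m) R} {B : Matrix (Fin n) (Fin n) R}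
    (hA : IsHomogSq 𝒜 A) (hB : IsHomogSq 𝒜 B) : IsHomogSq 𝒜 (diagSum A B) := by
  obtain ⟨α, β, hA⟩ := hA
  obtain ⟨α', β', hB⟩ := hB
  exact ⟨_, _, (HasDistribution.blockDiag hA hB).submatrix _ _⟩

lemma IsHomogSq.submatrix {m n : ℕ} {A : Matrix (Fin m) (Fin m) R} (hA : IsHomogSq 𝒜 A)
    (e f : Fin n → Fin m) : IsHomogSq 𝒜 (A.submatrix e f) := by
  obtain ⟨α, β, hA⟩ := hA
  exact ⟨_, _, HasDistribution.submatrix hA e f⟩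

end Homogeneous

section DeterminantalSum

variable {Γ : Type u} [Group Γ] {R : Type v} [Ring R] {𝒜 : Γ → AddSubgroup R}
variable {ι κ ι' κ' : Type*}

/-- `C` is the determinantal sum of `A` and `B` with respect to the column `c`. -/
def IsColSum (A B C : Matrix ι κ R) (c : κ) : Prop :=
  (∀ i j, j ≠ c → A i j = B i j ∧ C i j = A i j) ∧ ∀ i, C i c = A i c + B i c

/-- `C` is a determinantal sum of the homogeneous matrices `A` and `B`; this is `GrDetSum` for
arbitrary index types, with row sums encoded as column sums of the transposes. -/
def IsHomogDetSum (𝒜 : Γ → AddSubgroup R) (A B C : Matrix ι κ R) : Prop :=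
  (∃ α β, HasDistribution 𝒜 A α β ∧ HasDistribution 𝒜 B α β) ∧
    ((∃ c, IsColSum A B C c) ∨ ∃ r, IsColSum Aᵀ Bᵀ Cᵀ r)

lemma isColSum_iff [DecidableEq κ] {A B C : Matrix ι κ R} {c : κ} :
    IsColSum A B C c ↔ (∀ i j, j ≠ c → A i j = B i j) ∧
      ∀ i j, C i j = if j = c then A i j + B i j else A i j := by
  constructor
  · rintro ⟨h, hc⟩
    refine ⟨fun i j hj => (h i j hj).1, fun i j => ?_⟩
    split_ifs with hj
    · exact hj ▸ hc i
    · exact (h i j hj).2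
  · rintro ⟨h, hC⟩
    exact ⟨fun i j hj => ⟨h i j hj, by simp [hC, hj]⟩, fun i => by simp [hC]⟩

lemma grDetSum_iff {n : ℕ} {A B C : Matrix (Fin n) (Fin n) R} :
    GrDetSum 𝒜 A B C ↔ IsHomogDetSum 𝒜 A B C := by
  refine and_congr Iff.rfl (or_congr ?_ (exists_congr fun r => ?_))
  · simp only [isColSum_iff]
  · simp only [isColSum_iff, transpose_apply]
    exact and_congr forall_comm forall_comm

lemma IsColSum.submatrix {A B C : Matrix ι κ R} {c : κ} (h : IsColSum A B C c) (e : ι' → ι)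
    (f : κ' ≃ κ) : IsColSum (A.submatrix e f) (B.submatrix e f) (C.submatrix e f) (f.symm c) :=
  ⟨fun _ _ hj => h.1 _ _ fun hf => hj (by simp [← hf]), fun _ => by simp [h.2]⟩

lemma IsColSum.fromBlocks {A B C : Matrix ι κ R} {c : κ} (h : IsColSum A B C c)
    (D : Matrix ι' κ' R) :
    IsColSum (fromBlocks A 0 0 D) (fromBlocks B 0 0 D) (fromBlocks C 0 0 D) (Sum.inl c) := by
  refine ⟨?_, ?_⟩
  · rintro (i | i) (j | j) hj
    · exact h.1 i j (by simpa using hj)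
    all_goals simp
  · rintro (i | i)
    · exact h.2 i
    · simp

namespace IsHomogDetSum

variable {A B C : Matrix ι κ R}

lemma exists_hasDistribution (h : IsHomogDetSum 𝒜 A B C) : ∃ α β, HasDistribution 𝒜 C α β := by
  classical
  obtain ⟨⟨α, β, hA, hB⟩, ⟨c, h⟩ | ⟨c, h⟩⟩ := h
  all_goals
    refine ⟨α, β, fun i j => ?_⟩
    rw [isColSum_iff] at h
  · rw [h.2 i j]
    split_ifs
    exacts [add_mem (hA i j) (hB i j), hA i j]
  · rw [← transpose_apply C, h.2 j i]
    split_ifs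
    exacts [add_mem (hA i j) (hB i j), hA i j]

lemma submatrix (h : IsHomogDetSum 𝒜 A B C) (e : ι' ≃ ι) (f : κ' ≃ κ) :
    IsHomogDetSum 𝒜 (A.submatrix e f) (B.submatrix e f) (C.submatrix e f) := by
  obtain ⟨⟨α, β, hA, hB⟩, h⟩ := h
  exact ⟨⟨_, _, hA.submatrix e f, hB.submatrix e f⟩,
    h.imp (fun ⟨c, h⟩ => ⟨_, h.submatrix e f⟩) fun ⟨r, h⟩ => ⟨_, h.submatrix f e⟩⟩

lemma fromBlocks (h : IsHomogDetSum 𝒜 A B C) {D : Matrix ι' κ' R} {α : ι' → Γ} {β : κ' → Γ}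
    (hD : HasDistribution 𝒜 D α β) :
    IsHomogDetSum 𝒜 (fromBlocks A 0 0 D) (fromBlocks B 0 0 D) (fromBlocks C 0 0 D) := by
  obtain ⟨⟨_, _, hA, hB⟩, h⟩ := h
  refine ⟨⟨_, _, hA.blockDiag hD, hB.blockDiag hD⟩,
    h.imp (fun ⟨c, h⟩ => ⟨_, h.fromBlocks D⟩) fun ⟨r, h⟩ => ⟨Sum.inl r, ?_⟩⟩
  simpa only [fromBlocks_transpose, transpose_zero] using h.fromBlocks Dᵀ

end IsHomogDetSum

namespace GrDetSum

variable {n : ℕ} {A B C : Matrix (Fin n) (Fin n) R}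

lemma isHomogSq (h : GrDetSum 𝒜 A B C) : IsHomogSq 𝒜 C :=
  (grDetSum_iff.1 h).exists_hasDistribution

lemma submatrix (h : GrDetSum 𝒜 A B C) (e f : Equiv.Perm (Fin n)) :
    GrDetSum 𝒜 (A.submatrix e f) (B.submatrix e f) (C.submatrix e f) :=
  grDetSum_iff.2 ((grDetSum_iff.1 h).submatrix e f)

lemma diagSum_right (h : GrDetSum 𝒜 A B C) {m : ℕ} {D : Matrix (Fin m) (Fin m) R}
    (hD : IsHomogSq 𝒜 D) : GrDetSum 𝒜 (diagSum A D) (diagSum B D) (diagSum C D) := by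
  obtain ⟨α, β, hD⟩ := hD
  exact grDetSum_iff.2 (((grDetSum_iff.1 h).fromBlocks hD).submatrix _ _)

lemma diagSum_left (h : GrDetSum 𝒜 A B C) {m : ℕ} {D : Matrix (Fin m) (Fin m) R}
    (hD : IsHomogSq 𝒜 D) : GrDetSum 𝒜 (diagSum D A) (diagSum D B) (diagSum D C) := by
  obtain ⟨α, β, hD⟩ := hD
  have := (((grDetSum_iff.1 h).fromBlocks hD).submatrix (Equiv.sumComm _ _)
    (Equiv.sumComm _ _)).submatrix finSumFinEquiv.symm finSumFinEquiv.symm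
  simp only [Equiv.sumComm_apply, fromBlocks_submatrix_sum_swap_sum_swap] at this
  exact grDetSum_iff.2 this

end GrDetSum

end DeterminantalSum

/-! ### Square matrices up to permutations -/

section PermEquiv

variable {R : Type v} {ι κ ι' κ' ι₁ κ₁ ι₂ κ₂ : Type*}

/-- `A` and `B` agree up to independent relabellings of the rows and of the columns. -/
def PermEquiv (A : Matrix ι κ R) (B : Matrix ι' κ' R) : Prop :=
  ∃ (e : ι ≃ ι') (f : κ ≃ κ'), A = B.submatrix e f

namespace PermEquiv

variable {A : Matrix ι κ R} {B : Matrix ι' κ' R} {C : Matrix ι₁ κ₁ R} {D : Matrix ι₂ κ₂ R}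

lemma refl (A : Matrix ι κ R) : PermEquiv A A := ⟨Equiv.refl _, Equiv.refl _, rfl⟩

lemma submatrix (A : Matrix ι κ R) (e : ι' ≃ ι) (f : κ' ≃ κ) :
    PermEquiv (A.submatrix e f) A :=
  ⟨e, f, rfl⟩

lemma symm : PermEquiv A B → PermEquiv B A := by
  rintro ⟨e, f, rfl⟩
  exact ⟨e.symm, f.symm, by simp⟩

lemma trans : PermEquiv A B → PermEquiv B C → PermEquiv A C := by
  rintro ⟨e, f, rfl⟩ ⟨e', f', rfl⟩
  exact ⟨e.trans e', f.trans f', rfl⟩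

lemma size_eq {m n : ℕ} {A : Matrix (Fin m) (Fin m) R} {B : Matrix (Fin n) (Fin n) R}
    (h : PermEquiv A B) : m = n := by
  obtain ⟨e, -⟩ := h
  simpa using Fintype.card_congr e

variable [Ring R]

lemma fromBlocks : PermEquiv A B → PermEquiv C D →
    PermEquiv (fromBlocks A 0 0 C) (fromBlocks B 0 0 D) := by
  rintro ⟨e, f, rfl⟩ ⟨e', f', rfl⟩
  refine ⟨e.sumCongr e', f.sumCongr f', ?_⟩
  ext (i | i) (j | j) <;> simp

lemma fromBlocks_comm (A : Matrix ι κ R) (B : Matrix ι' κ' R) :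
    PermEquiv (Matrix.fromBlocks A 0 0 B) (Matrix.fromBlocks B 0 0 A) :=
  ⟨Equiv.sumComm _ _, Equiv.sumComm _ _, by
    simp only [Equiv.sumComm_apply, fromBlocks_submatrix_sum_swap_sum_swap]⟩

lemma fromBlocks_assoc (A : Matrix ι κ R) (B : Matrix ι' κ' R) (C : Matrix ι₁ κ₁ R) :
    PermEquiv (Matrix.fromBlocks (Matrix.fromBlocks A 0 0 B) 0 0 C)
      (Matrix.fromBlocks A 0 0 (Matrix.fromBlocks B 0 0 C)) := by
  refine ⟨Equiv.sumAssoc _ _ _, Equiv.sumAssoc _ _ _, ?_⟩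
  ext ((i | i) | i) ((j | j) | j) <;> simp

lemma fromBlocks_empty [IsEmpty ι] [IsEmpty κ] (A : Matrix ι κ R) (B : Matrix ι' κ' R) :
    PermEquiv (Matrix.fromBlocks A 0 0 B) B := by
  refine ⟨Equiv.emptySum _ _, Equiv.emptySum _ _, ?_⟩
  ext (i | i) (j | j)
  · exact isEmptyElim i
  · exact isEmptyElim i
  · exact isEmptyElim j
  · simp

lemma diagSum {m n m' n' : ℕ} (A : Matrix (Fin m) (Fin n) R) (B : Matrix (Fin m') (Fin n') R) :
    PermEquiv (diagSum A B) (Matrix.fromBlocks A 0 0 B) :=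
  submatrix _ finSumFinEquiv.symm finSumFinEquiv.symm

end PermEquiv

variable (R) in
/-- Equivalence of square matrices up to independent permutations of the rows and the columns. -/
def permSetoid : Setoid (SqMat R) where
  r p q := PermEquiv p.2 q.2
  iseqv := ⟨fun p => .refl p.2, .symm, .trans⟩

variable (R) in
/-- The commutative monoid of square matrices up to row and column permutations, under diagonal
sum. -/
def PermClass : Type v := Quotient (permSetoid R)

/-- The class of a square matrix up to row and column permutations. -/
def permClass (p : SqMat R) : PermClass R := Quotient.mk (permSetoid R) p

lemma permClass_eq_iff {p q : SqMat R} : permClass p = permClass q ↔ PermEquiv p.2 q.2 :=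
  Quotient.eq (r := permSetoid R)

variable [Ring R]

lemma PermEquiv.diagSum_congr {p p' q q' : SqMat R} (hp : PermEquiv p.2 p'.2)
    (hq : PermEquiv q.2 q'.2) :
    PermEquiv (_root_.diagSum p.2 q.2) (_root_.diagSum p'.2 q'.2) :=
  (diagSum _ _).trans ((hp.fromBlocks hq).trans (diagSum _ _).symm)

instance : Add (PermClass R) where
  add := Quotient.map₂ (sa := permSetoid R) (sb := permSetoid R) (sc := permSetoid R)
    (fun p q => ⟨p.1 + q.1, diagSum p.2 q.2⟩) fun _ _ hp _ _ hq => hp.diagSum_congr hq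

instance : Zero (PermClass R) where
  zero := permClass ⟨0, 0⟩

lemma permClass_diagSum {m n : ℕ} (A : Matrix (Fin m) (Fin m) R) (B : Matrix (Fin n) (Fin n) R) :
    permClass ⟨m + n, diagSum A B⟩ = permClass ⟨m, A⟩ + permClass ⟨n, B⟩ :=
  rfl

instance : AddCommMonoid (PermClass R) where
  add_assoc := by
    rintro ⟨p⟩ ⟨q⟩ ⟨r⟩
    refine permClass_eq_iff.2 (((PermEquiv.diagSum _ _).trans
      ((PermEquiv.diagSum _ _).fromBlocks (.refl _))).trans
      ((PermEquiv.fromBlocks_assoc p.2 q.2 r.2).trans ?_))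
    exact (((PermEquiv.refl _).fromBlocks (PermEquiv.diagSum _ _).symm)).trans
      (PermEquiv.diagSum _ _).symm
  zero_add := by
    rintro ⟨p⟩
    exact permClass_eq_iff.2 ((PermEquiv.diagSum _ _).trans (.fromBlocks_empty _ _))
  add_zero := by
    rintro ⟨p⟩
    exact permClass_eq_iff.2 ((PermEquiv.diagSum _ _).trans
      ((PermEquiv.fromBlocks_comm _ _).trans (.fromBlocks_empty _ _)))
  add_comm := by
    rintro ⟨p⟩ ⟨q⟩
    exact permClass_eq_iff.2 ((PermEquiv.diagSum _ _).trans
      ((PermEquiv.fromBlocks_comm _ _).trans (PermEquiv.diagSum _ _).symm))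
  nsmul := nsmulRec

lemma permClass_eq_zero (p : SqMat R) (hp : p.1 = 0) : permClass p = 0 := by
  obtain ⟨n, A⟩ := p
  obtain rfl : n = 0 := hp
  exact congrArg (fun A => permClass ⟨0, A⟩) (Subsingleton.elim A 0)

lemma permClass_diagIter {n : ℕ} (A : Matrix (Fin n) (Fin n) R) (r : ℕ) :
    permClass ⟨n * r, diagIter A r⟩ = r • permClass ⟨n, A⟩ := by
  induction r with
  | zero => rw [zero_smul, permClass_eq_zero _ (by simp)]
  | succ r ih => rw [succ_nsmul, ← ih, ← permClass_diagSum]; rfl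

lemma permClass_one (n : ℕ) :
    permClass (⟨n, 1⟩ : SqMat R) = n • permClass ⟨1, 1⟩ := by
  induction n with
  | zero => rw [zero_smul, permClass_eq_zero _ rfl]
  | succ n ih =>
    rw [succ_nsmul, ← ih, ← permClass_diagSum, diagSum, fromBlocks_one, reindex_apply,
      submatrix_one_equiv]

end PermEquiv

/-! ### Existence of gr-prime matrix ideals -/

section MatrixIdeal

variable {Γ : Type u} [Group Γ] {R : Type v} [Ring R] {𝒜 : Γ → AddSubgroup R}
variable {W : Set (SqMat R)}

/-- A set of homogeneous square matrices containing the matrices that are not gr-full and closed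
under permutations and under diagonal sums with homogeneous matrices, i.e. a gr-matrix pre-ideal
without the closure under determinantal sums. -/
structure IsDiagIdeal (𝒜 : Γ → AddSubgroup R) (W : Set (SqMat R)) : Prop where
  isHomogSq : ∀ p ∈ W, IsHomogSq 𝒜 p.2
  mem_of_not_isGrFull : ∀ {n : ℕ} (A : Matrix (Fin n) (Fin n) R),
    IsHomogSq 𝒜 A → ¬ IsGrFull 𝒜 A → (⟨n, A⟩ : SqMat R) ∈ W
  diagSum_mem : ∀ {m n : ℕ} (A : Matrix (Fin m) (Fin m) R) (B : Matrix (Fin n) (Fin n) R),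
    (⟨m, A⟩ : SqMat R) ∈ W → IsHomogSq 𝒜 B → (⟨m + n, diagSum A B⟩ : SqMat R) ∈ W
  submatrix_mem : ∀ {n : ℕ} (A : Matrix (Fin n) (Fin n) R) (e f : Equiv.Perm (Fin n)),
    (⟨n, A⟩ : SqMat R) ∈ W → (⟨n, A.submatrix e f⟩ : SqMat R) ∈ W

/-- A gr-matrix pre-ideal: axioms (PM1), (PM2), (PM3) and (PM6) of a gr-prime matrix ideal. -/
structure IsGrMatrixPreideal (𝒜 : Γ → AddSubgroup R) (I : Set (SqMat R)) : Prop
    extends IsDiagIdeal 𝒜 I where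
  detSum_mem : ∀ {n : ℕ} (A B C : Matrix (Fin n) (Fin n) R),
    (⟨n, A⟩ : SqMat R) ∈ I → (⟨n, B⟩ : SqMat R) ∈ I → GrDetSum 𝒜 A B C → (⟨n, C⟩ : SqMat R) ∈ I

lemma IsGrPrimeMatrixIdeal.isGrMatrixPreideal {I : Set (SqMat R)}
    (hI : IsGrPrimeMatrixIdeal 𝒜 I) : IsGrMatrixPreideal 𝒜 I where
  isHomogSq := hI.subset_homog
  mem_of_not_isGrFull := hI.pm1
  diagSum_mem := hI.pm3
  submatrix_mem := hI.pm6
  detSum_mem := hI.pm2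

lemma IsHomogSq.of_permEquiv {m n : ℕ} {A : Matrix (Fin m) (Fin m) R}
    {B : Matrix (Fin n) (Fin n) R} (hB : IsHomogSq 𝒜 B) (h : PermEquiv A B) : IsHomogSq 𝒜 A := by
  obtain ⟨e, f, rfl⟩ := h
  exact hB.submatrix e f

namespace IsDiagIdeal

lemma mem_of_permEquiv (hW : IsDiagIdeal 𝒜 W) {p q : SqMat R} (hq : q ∈ W)
    (h : PermEquiv p.2 q.2) : p ∈ W := by
  obtain ⟨m, A⟩ := p
  obtain ⟨n, B⟩ := q
  obtain rfl : m = n := h.size_eq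
  obtain ⟨e, f, h⟩ := h
  change A = B.submatrix e f at h
  exact h ▸ hW.submatrix_mem B e f hq

lemma mem_of_permClass_eq (hW : IsDiagIdeal 𝒜 W) {p q : SqMat R} (hq : q ∈ W)
    (h : permClass p = permClass q) : p ∈ W :=
  hW.mem_of_permEquiv hq (permClass_eq_iff.1 h)

lemma mem_of_permClass_eq_add (hW : IsDiagIdeal 𝒜 W) {p q r : SqMat R} (hp : p ∈ W)
    (hq : IsHomogSq 𝒜 q.2) (h : permClass r = permClass p + permClass q) : r ∈ W :=
  hW.mem_of_permClass_eq (hW.diagSum_mem p.2 q.2 hp hq) h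

end IsDiagIdeal

lemma isDiagIdeal_not_isGrFull [IsMulGraded 𝒜] :
    IsDiagIdeal 𝒜 {p | IsHomogSq 𝒜 p.2 ∧ ¬ IsGrFull 𝒜 p.2} where
  isHomogSq _ hp := hp.1
  mem_of_not_isGrFull _ hA hf := ⟨hA, hf⟩
  diagSum_mem := by
    rintro m n A B ⟨hA, hf⟩ hB
    refine ⟨hA.diagSum hB, fun hf' => hf fun r X Y α lam β hX hY hXY => ?_⟩
    obtain ⟨α', β', hB⟩ := hB
    refine Nat.le_of_add_le_add_right (hf' (r + n) (diagSum X B) (diagSum Y 1) _ _ _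
      ((HasDistribution.blockDiag hX hB).submatrix _ finSumFinEquiv.symm)
      ((HasDistribution.blockDiag hY .one).submatrix _ _) ?_)
    change A = X * Y at hXY
    simp only [diagSum, reindex_apply, submatrix_mul_equiv, fromBlocks_multiply, hXY,
      Matrix.mul_zero, Matrix.zero_mul, Matrix.mul_one, add_zero, zero_add]
  submatrix_mem := by
    rintro n A e f ⟨hA, hf⟩
    refine ⟨hA.submatrix e f, fun hf' => hf fun r X Y α lam β hX hY hXY => ?_⟩
    refine hf' r (X.submatrix e id) (Y.submatrix id f) _ lam _
      (HasDistribution.submatrix hX e id) (HasDistribution.submatrix hY id f) ?_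
    change A = X * Y at hXY
    rw [hXY]
    rfl

variable (𝒜) in
/-- The matrices `E (A ⊕ C) F` with `C` homogeneous and `E`, `F` permutation matrices, for
`p = ⟨n, A⟩`. -/
def diagMultiples (p : SqMat R) : Set (SqMat R) :=
  {q | ∃ c : SqMat R, IsHomogSq 𝒜 c.2 ∧ permClass q = permClass p + permClass c}

lemma diagMultiples_eq {n : ℕ} (A : Matrix (Fin n) (Fin n) R) :
    diagMultiples 𝒜 ⟨n, A⟩ = {p | ∃ (k : ℕ) (C : Matrix (Fin k) (Fin k) R)
      (e f : Equiv.Perm (Fin (n + k))),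
      IsHomogSq 𝒜 C ∧ p = ⟨n + k, (diagSum A C).submatrix e f⟩} := by
  ext ⟨m, B⟩
  constructor
  · rintro ⟨⟨k, C⟩, hC, h⟩
    have h : PermEquiv B (diagSum A C) := permClass_eq_iff.1 h
    obtain rfl := h.size_eq
    obtain ⟨e, f, rfl⟩ := h
    exact ⟨k, C, e, f, hC, rfl⟩
  · rintro ⟨k, C, e, f, hC, h⟩
    rw [h]
    exact ⟨⟨k, C⟩, hC, permClass_eq_iff.2 (.submatrix _ e f)⟩

lemma self_mem_diagMultiples (p : SqMat R) : p ∈ diagMultiples 𝒜 p :=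
  ⟨⟨0, 0⟩, ⟨fun _ => 1, fun _ => 1, fun i => i.elim0⟩, (add_zero _).symm⟩

lemma IsDiagIdeal.union_diagMultiples (hW : IsDiagIdeal 𝒜 W) {p : SqMat R}
    (hp : IsHomogSq 𝒜 p.2) : IsDiagIdeal 𝒜 (W ∪ diagMultiples 𝒜 p) where
  isHomogSq := by
    rintro q (hq | ⟨c, hc, hq⟩)
    · exact hW.isHomogSq q hq
    · exact (hp.diagSum hc).of_permEquiv (permClass_eq_iff.1 hq)
  mem_of_not_isGrFull A hA hf := .inl (hW.mem_of_not_isGrFull A hA hf)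
  diagSum_mem := by
    rintro m n A B (hA | ⟨c, hc, hA⟩) hB
    · exact .inl (hW.diagSum_mem A B hA hB)
    · refine .inr ⟨⟨c.1 + n, diagSum c.2 B⟩, hc.diagSum hB, ?_⟩
      rw [permClass_diagSum, permClass_diagSum, hA, add_assoc]
  submatrix_mem := by
    rintro n A e f (hA | ⟨c, hc, hA⟩)
    · exact .inl (hW.submatrix_mem A e f hA)
    · exact .inr ⟨c, hc, (permClass_eq_iff.2 (.submatrix A e f)).trans hA⟩

lemma IsDiagIdeal.detSumClosure (hW : IsDiagIdeal 𝒜 W) :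
    IsGrMatrixPreideal 𝒜 {p | IsDetSumOf 𝒜 W p} where
  isHomogSq p hp := by
    induction hp with
    | base p hp => exact hW.isHomogSq p hp
    | step A B C _ _ h _ _ => exact h.isHomogSq
  mem_of_not_isGrFull A hA hf := .base _ (hW.mem_of_not_isGrFull A hA hf)
  diagSum_mem {m n} A B hA hB := by
    suffices H : ∀ p : SqMat R, IsDetSumOf 𝒜 W p → IsDetSumOf 𝒜 W ⟨p.1 + n, diagSum p.2 B⟩ from
      H _ hA
    intro p hp
    induction hp with
    | base p hp => exact .base _ (hW.diagSum_mem _ _ hp hB)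
    | step A' B' C' _ _ h h₁ h₂ => exact .step _ _ _ h₁ h₂ (h.diagSum_right hB)
  submatrix_mem {n} A e f hA := by
    suffices H : ∀ p : SqMat R, IsDetSumOf 𝒜 W p → ∀ e f : Equiv.Perm (Fin p.1),
        IsDetSumOf 𝒜 W ⟨p.1, p.2.submatrix e f⟩ from H _ hA e f
    intro p hp
    induction hp with
    | base p hp => exact fun e f => .base _ (hW.submatrix_mem _ e f hp)
    | step A' B' C' _ _ h h₁ h₂ => exact fun e f => .step _ _ _ (h₁ e f) (h₂ e f) (h.submatrix e f)
  detSum_mem := IsDetSumOf.step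

lemma IsGrMatrixPreideal.diagSum_mem_of_detSumClosure (hW : IsGrMatrixPreideal 𝒜 W)
    {a b p q : SqMat R} (ha : IsHomogSq 𝒜 a.2) (hb : IsHomogSq 𝒜 b.2)
    (hab : (⟨a.1 + b.1, diagSum a.2 b.2⟩ : SqMat R) ∈ W)
    (hp : IsDetSumOf 𝒜 (W ∪ diagMultiples 𝒜 a) p) (hq : IsDetSumOf 𝒜 (W ∪ diagMultiples 𝒜 b) q) :
    (⟨p.1 + q.1, diagSum p.2 q.2⟩ : SqMat R) ∈ W := by
  have hWa := hW.union_diagMultiples ha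
  have hWb := hW.union_diagMultiples hb
  induction hp with
  | step A B C _ _ h h₁ h₂ =>
    exact hW.detSum_mem _ _ _ h₁ h₂ (h.diagSum_right (hWb.detSumClosure.isHomogSq q hq))
  | base p hp =>
    have hp_homog := hWa.isHomogSq p hp
    induction hq with
    | step A B C _ _ h h₁ h₂ => exact hW.detSum_mem _ _ _ h₁ h₂ (h.diagSum_left hp_homog)
    | base q hq =>
      have hq_homog := hWb.isHomogSq q hq
      rcases hp with hp | ⟨c, hc, hp⟩
      · exact hW.diagSum_mem _ _ hp hq_homog
      rcases hq with hq | ⟨d, hd, hq⟩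
      · exact hW.mem_of_permClass_eq_add hq hp_homog ((permClass_diagSum _ _).trans (add_comm _ _))
      refine hW.mem_of_permClass_eq_add hab (q := ⟨_, diagSum c.2 d.2⟩) (hc.diagSum hd) ?_
      simp only [permClass_diagSum]
      rw [hp, hq, add_add_add_comm]

end MatrixIdeal

section Zorn

variable {Γ : Type u} [Group Γ] {R : Type v} [Ring R] {𝒜 : Γ → AddSubgroup R}

lemma IsGrMatrixPreideal.sUnion {c : Set (Set (SqMat R))} (hc : ∀ I ∈ c, IsGrMatrixPreideal 𝒜 I)
    (hchain : IsChain (· ⊆ ·) c) (hne : c.Nonempty) : IsGrMatrixPreideal 𝒜 (⋃₀ c) where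
  isHomogSq := by
    rintro p ⟨I, hI, hp⟩
    exact (hc I hI).isHomogSq p hp
  mem_of_not_isGrFull A hA hf :=
    let ⟨I, hI⟩ := hne
    ⟨I, hI, (hc I hI).mem_of_not_isGrFull A hA hf⟩
  diagSum_mem := by
    rintro m n A B ⟨I, hI, hA⟩ hB
    exact ⟨I, hI, (hc I hI).diagSum_mem A B hA hB⟩
  submatrix_mem := by
    rintro n A e f ⟨I, hI, hA⟩
    exact ⟨I, hI, (hc I hI).submatrix_mem A e f hA⟩
  detSum_mem := by
    rintro n A B C ⟨I, hI, hA⟩ ⟨J, hJ, hB⟩ h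
    rcases hchain.total hI hJ with hIJ | hJI
    · exact ⟨J, hJ, (hc J hJ).detSum_mem A B C (hIJ hA) hB h⟩
    · exact ⟨I, hI, (hc I hI).detSum_mem A B C hA (hJI hB) h⟩

lemma IsGrMatrixPreideal.isGrPrimeMatrixIdeal_of_maximal {T : AddSubmonoid (PermClass R)}
    (hT : permClass ⟨1, 1⟩ ∈ T) {I : Set (SqMat R)}
    (hmax : Maximal (fun J => IsGrMatrixPreideal 𝒜 J ∧ ∀ p ∈ J, permClass p ∉ T) I) :
    IsGrPrimeMatrixIdeal 𝒜 I := by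
  obtain ⟨hI, hdisj⟩ := hmax.prop
  have exists_mem_closure (a : SqMat R) (ha : IsHomogSq 𝒜 a.2) (haI : a ∉ I) :
      ∃ p, IsDetSumOf 𝒜 (I ∪ diagMultiples 𝒜 a) p ∧ permClass p ∈ T := by
    by_contra! hcon
    have hle := hmax.le_of_ge ⟨(hI.union_diagMultiples ha).detSumClosure, hcon⟩
      fun p hp => .base p (.inl hp)
    exact haI (hle (.base a (.inr (self_mem_diagMultiples a))))
  refine ⟨hI.isHomogSq, hI.mem_of_not_isGrFull, hI.detSum_mem, hI.diagSum_mem, ?_,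
    fun h => hdisj _ h hT, hI.submatrix_mem⟩
  intro m n A B hA hB hAB
  by_contra! hcon
  obtain ⟨p, hp, hpT⟩ := exists_mem_closure ⟨m, A⟩ hA hcon.1
  obtain ⟨q, hq, hqT⟩ := exists_mem_closure ⟨n, B⟩ hB hcon.2
  exact hdisj _ (hI.diagSum_mem_of_detSumClosure hA hB hAB hp hq) (T.add_mem hpT hqT)

theorem IsGrMatrixPreideal.exists_le_isGrPrimeMatrixIdeal {I₀ : Set (SqMat R)}
    (hI₀ : IsGrMatrixPreideal 𝒜 I₀) {T : AddSubmonoid (PermClass R)} (hT : permClass ⟨1, 1⟩ ∈ T)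
    (hdisj : ∀ p ∈ I₀, permClass p ∉ T) :
    ∃ I, IsGrPrimeMatrixIdeal 𝒜 I ∧ I₀ ⊆ I ∧ ∀ p ∈ I, permClass p ∉ T := by
  obtain ⟨I, hle, hmax⟩ := zorn_subset_nonempty
    {J | IsGrMatrixPreideal 𝒜 J ∧ ∀ p ∈ J, permClass p ∉ T} (fun c hc hchain hne =>
      ⟨⋃₀ c, ⟨.sUnion (fun J hJ => (hc hJ).1) hchain hne, fun p ⟨J, hJ, hp⟩ => (hc hJ).2 p hp⟩,
        fun _ => Set.subset_sUnion_of_mem⟩) I₀ ⟨hI₀, hdisj⟩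
  exact ⟨I, isGrPrimeMatrixIdeal_of_maximal hT hmax, hle, hmax.prop.2⟩

theorem exists_isGrPrimeMatrixIdeal_mem_notMem [IsMulGraded 𝒜] {P Q : SqMat R}
    (hP : IsHomogSq 𝒜 P.2) (hQ : IsHomogSq 𝒜 Q.2)
    (h : ∀ r m : ℕ, 1 ≤ r →
      ¬ IsDetSumOf 𝒜 ({p | IsHomogSq 𝒜 p.2 ∧ ¬ IsGrFull 𝒜 p.2} ∪ diagMultiples 𝒜 Q)
        ⟨P.1 * r + m, diagSum (diagIter P.2 r) 1⟩) :
    ∃ I, IsGrPrimeMatrixIdeal 𝒜 I ∧ Q ∈ I ∧ P ∉ I := by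
  have hI₀ := (isDiagIdeal_not_isGrFull.union_diagMultiples hQ).detSumClosure
  obtain ⟨I, hI, hle, hIT⟩ := hI₀.exists_le_isGrPrimeMatrixIdeal
    (T := AddSubmonoid.closure {permClass P, permClass ⟨1, 1⟩})
    (AddSubmonoid.subset_closure (by simp)) fun p hp hpT => by
      obtain ⟨r, m, hrm⟩ := (AddSubmonoid.mem_closure_pair _ _ _).1 hpT
      refine h (r + 1) m (by simp) (hI₀.mem_of_permClass_eq_add hp hP ?_)
      rw [permClass_diagSum, permClass_diagIter, permClass_one, ← hrm, succ_nsmul, add_right_comm]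
  exact ⟨I, hI, hle (.base Q (.inr (self_mem_diagMultiples Q))),
    fun hPI => hIT P hPI (AddSubmonoid.subset_closure (by simp))⟩

end Zorn

/-! ### Block matrices in matrix ideals -/

section MatrixMembership

variable {R : Type v} {ι κ τ ι' κ' : Type*} {W : Set (SqMat R)}

/-- Membership of a matrix with arbitrary index types in a set of square matrices, up to
relabelling of the rows and the columns. -/
def MatMem (W : Set (SqMat R)) (A : Matrix ι κ R) : Prop :=
  ∃ p ∈ W, PermEquiv A p.2

lemma MatMem.congr {A : Matrix ι κ R} {B : Matrix ι' κ' R} (hB : MatMem W B)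
    (h : PermEquiv A B) : MatMem W A := by
  obtain ⟨p, hp, hBp⟩ := hB
  exact ⟨p, hp, h.trans hBp⟩

lemma matMem_submatrix_iff {A : Matrix ι κ R} (e : ι' ≃ ι) (f : κ' ≃ κ) :
    MatMem W (A.submatrix e f) ↔ MatMem W A :=
  ⟨fun h => h.congr (PermEquiv.submatrix A e f).symm, fun h => h.congr (.submatrix A e f)⟩

section UpdateCol

variable [DecidableEq κ]

lemma updateCol_induction [Finite κ] {p : Matrix ι κ R → Prop} {M N : Matrix ι κ R} (hM : p M)
    (step : ∀ M c, p M → p (M.updateCol c (N.col c))) : p N := by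
  cases nonempty_fintype κ
  have hybrid (s : Finset κ) : p (of fun i j => if j ∈ s then N i j else M i j) := by
    induction s using Finset.induction_on with
    | empty => exact hM
    | insert c s _ ih =>
      convert step _ c ih using 2
      ext i j
      rcases eq_or_ne j c with rfl | hj
      · simp
      · simp [hj]
  convert hybrid Finset.univ using 2
  ext
  simp

lemma fromBlocks_updateCol_inr [DecidableEq τ] (A : Matrix ι τ R) (B : Matrix ι κ R)
    (C : Matrix ι' τ R) (D : Matrix ι' κ R) (c : κ) (x : ι → R) (y : ι' → R) :
    (fromBlocks A B C D).updateCol (Sum.inr c) (Sum.elim x y) =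
      fromBlocks A (B.updateCol c x) C (D.updateCol c y) := by
  ext (i | i) (j | j) <;> simp [updateCol_apply]

variable [Ring R]

lemma isColSum_updateCol_sub (A : Matrix ι κ R) (c : κ) (x : ι → R) :
    IsColSum A (A.updateCol c (x - A.col c)) (A.updateCol c x) c :=
  ⟨fun i j hj => by simp [updateCol_ne hj], fun i => by simp⟩

lemma submatrix_mul_submatrix_updateCol [Fintype κ] (M : Matrix ι κ R) {c : κ} {t : κ → R}
    (ht : t c = 0) :
    M.submatrix id (Subtype.val : {d // d ≠ c} → κ) *
      ((1 : Matrix κ κ R).updateCol c t).submatrix (Subtype.val : {d // d ≠ c} → κ) id =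
      M.updateCol c (M *ᵥ t) := by
  ext i j
  rw [mul_apply]
  simp only [submatrix_apply, id_eq]
  rcases eq_or_ne j c with rfl | hj
  · simp only [updateCol_self, mulVec, dotProduct]
    rw [Fintype.sum_eq_add_sum_subtype_ne _ j, ht, mul_zero, zero_add]
  · simp only [updateCol_ne hj, one_apply]
    rw [Fintype.sum_eq_single ⟨j, hj⟩ fun d hd => by
      rw [if_neg fun h => hd (Subtype.ext h), mul_zero]]
    simp

end UpdateCol

end MatrixMembership

section DiagIdealMembership

variable {Γ : Type u} [Group Γ] {R : Type v} [Ring R] {𝒜 : Γ → AddSubgroup R} {W : Set (SqMat R)}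
variable {ι κ τ : Type*} {A B : Matrix ι ι R} {D : Matrix κ κ R}
variable {α β : ι → Γ} {α' β' : κ → Γ}

lemma HasDistribution.updateCol [DecidableEq κ] {A : Matrix ι κ R}
    (hA : HasDistribution 𝒜 A α β') {c : κ} {x : ι → R} (hx : ∀ i, x i ∈ 𝒜 (α i * (β' c)⁻¹)) :
    HasDistribution 𝒜 (A.updateCol c x) α β' := by
  intro i j
  rcases eq_or_ne j c with rfl | hj
  · simpa using hx i
  · simpa [updateCol_ne hj] using hA i j

namespace IsDiagIdeal

lemma matMem_iff_submatrix_mem (hW : IsDiagIdeal 𝒜 W) {n : ℕ} (e f : Fin n ≃ ι) :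
    MatMem W A ↔ (⟨n, A.submatrix e f⟩ : SqMat R) ∈ W := by
  rw [← matMem_submatrix_iff e f]
  exact ⟨fun ⟨_, hp, h⟩ => hW.mem_of_permEquiv hp h, fun h => ⟨_, h, .refl _⟩⟩

lemma matMem_fromBlocks_left [Finite ι] [Finite κ] (hW : IsDiagIdeal 𝒜 W) (hA : MatMem W A)
    (hD : HasDistribution 𝒜 D α' β') : MatMem W (fromBlocks A 0 0 D) := by
  obtain ⟨m, ⟨e⟩⟩ := Finite.exists_equiv_fin ι
  obtain ⟨n, ⟨f⟩⟩ := Finite.exists_equiv_fin κ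
  rw [hW.matMem_iff_submatrix_mem e.symm e.symm] at hA
  exact MatMem.congr ⟨_, hW.diagSum_mem _ _ hA ⟨_, _, hD.submatrix f.symm f.symm⟩, .refl _⟩
    (((PermEquiv.submatrix _ _ _).symm.fromBlocks (.symm (.submatrix _ _ _))).trans
      (PermEquiv.diagSum _ _).symm)

lemma matMem_fromBlocks_right [Finite ι] [Finite κ] (hW : IsDiagIdeal 𝒜 W)
    (hA : HasDistribution 𝒜 A α β) (hD : MatMem W D) : MatMem W (fromBlocks A 0 0 D) :=
  (hW.matMem_fromBlocks_left hD hA).congr (.fromBlocks_comm A D)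

variable [IsMulGraded 𝒜]

lemma matMem_mul [Fintype ι] [Fintype τ] (hW : IsDiagIdeal 𝒜 W) {X : Matrix ι τ R}
    {Y : Matrix τ ι R} {lam : τ → Γ} (hX : HasDistribution 𝒜 X α lam)
    (hY : HasDistribution 𝒜 Y lam β) (hcard : Fintype.card τ < Fintype.card ι) :
    MatMem W (X * Y) := by
  let e := (Fintype.equivFin ι).symm
  let f := (Fintype.equivFin τ).symm
  rw [hW.matMem_iff_submatrix_mem e e]
  refine hW.mem_of_not_isGrFull _ ⟨_, _, (hX.mul hY).submatrix e e⟩ fun hfull => ?_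
  refine hcard.not_ge (hfull _ (X.submatrix e f) (Y.submatrix f e) _ _ _ (hX.submatrix e f)
    (hY.submatrix f e) ?_)
  rw [submatrix_mul_equiv]

lemma matMem_updateCol_mulVec [Fintype ι] [DecidableEq ι] (hW : IsDiagIdeal 𝒜 W)
    (hA : HasDistribution 𝒜 A α β) {c : ι} {t : ι → R} (ht : t c = 0)
    (htβ : ∀ j, t j ∈ 𝒜 (β j * (β c)⁻¹)) : MatMem W (A.updateCol c (A *ᵥ t)) := by
  rw [← submatrix_mul_submatrix_updateCol A ht]
  exact hW.matMem_mul (hA.submatrix _ _) ((HasDistribution.one.updateCol htβ).submatrix _ _)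
    (Fintype.card_subtype_lt (x := c) (by simp))

lemma matMem_fromBlocks_updateCol_zero [Finite ι] [Finite κ] [DecidableEq κ]
    (hW : IsDiagIdeal 𝒜 W) {C : Matrix ι κ R} (hA : HasDistribution 𝒜 A α β)
    (hC : HasDistribution 𝒜 C α β') (hD : HasDistribution 𝒜 D α' β') (c : κ) :
    MatMem W (fromBlocks A C 0 (D.updateCol c 0)) := by
  classical
  cases nonempty_fintype ι
  cases nonempty_fintype κ
  have hY := (HasDistribution.one (𝒜 := 𝒜) (α := β')).updateCol (c := c) (x := 0)
    fun _ => zero_mem _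
  let val : {d // d ≠ c} → κ := Subtype.val
  have factor : fromBlocks (1 : Matrix ι ι R) 0 0 (D.submatrix id val) *
      fromBlocks A C 0 (((1 : Matrix κ κ R).updateCol c 0).submatrix val id) =
      fromBlocks A C 0 (D.updateCol c 0) := by
    simp [fromBlocks_multiply, val, submatrix_mul_submatrix_updateCol D (t := 0) (c := c) rfl]
  rw [← factor]
  refine hW.matMem_mul (HasDistribution.one.blockDiag (hD.submatrix _ _))
    (hA.fromBlocks hC .zero (hY.submatrix _ _)) ?_
  rw [Fintype.card_sum, Fintype.card_sum]
  exact Nat.add_lt_add_left (Fintype.card_subtype_lt (x := c) (by simp)) _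

end IsDiagIdeal

namespace IsGrMatrixPreideal

lemma matMem_of_isColSum [Finite ι] (hW : IsGrMatrixPreideal 𝒜 W) {C : Matrix ι ι R} {c : ι}
    (hA : MatMem W A) (hB : MatMem W B) (hAα : HasDistribution 𝒜 A α β)
    (hBα : HasDistribution 𝒜 B α β) (h : IsColSum A B C c) : MatMem W C := by
  obtain ⟨n, ⟨e⟩⟩ := Finite.exists_equiv_fin ι
  rw [hW.matMem_iff_submatrix_mem e.symm e.symm] at hA hB ⊢
  have hsum : IsHomogDetSum 𝒜 A B C := ⟨⟨α, β, hAα, hBα⟩, .inl ⟨c, h⟩⟩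
  exact hW.detSum_mem _ _ _ hA hB (grDetSum_iff.2 (hsum.submatrix e.symm e.symm))

lemma matMem_updateCol [Finite ι] [DecidableEq ι] (hW : IsGrMatrixPreideal 𝒜 W) {c : ι}
    {x : ι → R} (hA : HasDistribution 𝒜 A α β) (hx : ∀ i, x i ∈ 𝒜 (α i * (β c)⁻¹))
    (h : MatMem W A) (h' : MatMem W (A.updateCol c (x - A.col c))) :
    MatMem W (A.updateCol c x) :=
  hW.matMem_of_isColSum h h' hA (hA.updateCol fun i => sub_mem (hx i) (hA i c))
    (isColSum_updateCol_sub A c x)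

variable [IsMulGraded 𝒜]

lemma matMem_fromBlocks_of_zero₂₁ [Finite ι] [Finite κ] (hW : IsGrMatrixPreideal 𝒜 W)
    {C C' : Matrix ι κ R} (hA : HasDistribution 𝒜 A α β) (hC : HasDistribution 𝒜 C α β')
    (hC' : HasDistribution 𝒜 C' α β') (hD : HasDistribution 𝒜 D α' β')
    (h : MatMem W (fromBlocks A C 0 D)) : MatMem W (fromBlocks A C' 0 D) := by
  classical
  refine (updateCol_induction (p := fun C => HasDistribution 𝒜 C α β' ∧
    MatMem W (fromBlocks A C 0 D)) ⟨hC, h⟩ ?_).2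
  rintro M c ⟨hM, h⟩
  have hMC := hM.updateCol fun i => hC' i c
  have hdiff := hM.updateCol (c := c) (x := C'.col c - M.col c) fun i => sub_mem (hC' i c) (hM i c)
  have key := hW.matMem_updateCol (c := Sum.inr c) (x := Sum.elim (C'.col c) (D.col c))
    (hA.fromBlocks hM .zero hD) (Sum.rec (fun i => hC' i c) fun i => hD i c) h
  have hD_self : D.updateCol c (D.col c) = D := updateCol_eq_self D c
  have hcol : Sum.elim (C'.col c) (D.col c) - (fromBlocks A M 0 D).col (Sum.inr c) =
      Sum.elim (C'.col c - M.col c) 0 := by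
    ext (i | i) <;> simp
  rw [hcol, fromBlocks_updateCol_inr, fromBlocks_updateCol_inr, hD_self] at key
  exact ⟨hMC, key (hW.matMem_fromBlocks_updateCol_zero hA hdiff hD c)⟩

lemma matMem_fromBlocks_colOp [Fintype ι] [Finite κ] (hW : IsGrMatrixPreideal 𝒜 W)
    {B : Matrix ι κ R} {C : Matrix κ ι R} {T : Matrix ι κ R} (hA : HasDistribution 𝒜 A α β)
    (hB : HasDistribution 𝒜 B α β') (hC : HasDistribution 𝒜 C α' β)
    (hD : HasDistribution 𝒜 D α' β') (hT : HasDistribution 𝒜 T β β')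
    (h : MatMem W (fromBlocks A B C D)) :
    MatMem W (fromBlocks A (B + A * T) C (D + C * T)) := by
  classical
  cases nonempty_fintype κ
  refine (updateCol_induction (p := fun S => HasDistribution 𝒜 S β β' ∧
    MatMem W (fromBlocks A (B + A * S) C (D + C * S))) (M := 0) ⟨.zero, by simpa using h⟩ ?_).2
  rintro S c ⟨hS, h⟩
  have hF := hA.fromBlocks (hB.add (hA.mul hS)) hC (hD.add (hC.mul hS))
  have hF' := hA.fromBlocks (hB.add (hA.mul hT)) hC (hD.add (hC.mul hT))
  let F (S : Matrix ι κ R) := fromBlocks A (B + A * S) C (D + C * S)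
  have key := hW.matMem_updateCol (c := Sum.inr c) (x := (F T).col (Sum.inr c)) hF
    (fun i => hF' i (Sum.inr c)) h
  have hcol : (F T).col (Sum.inr c) - (F S).col (Sum.inr c) =
      F S *ᵥ Sum.elim (T.col c - S.col c) 0 := by
    rw [fromBlocks_mulVec]
    ext (i | i) <;> simp [F, mul_apply, mulVec, dotProduct, mul_sub]
  have hFT : (F S).updateCol (Sum.inr c) ((F T).col (Sum.inr c)) = F (S.updateCol c (T.col c)) := by
    simp only [F, mul_updateCol]
    ext (i | i) (j | j)
    · simp
    · rcases eq_or_ne j c with rfl | hj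
      · simp [mul_apply, mulVec, dotProduct]
      · simp [hj]
    · simp
    · rcases eq_or_ne j c with rfl | hj
      · simp [mul_apply, mulVec, dotProduct]
      · simp [hj]
  rw [hcol, hFT] at key
  refine ⟨hS.updateCol fun i => hT i c, key (hW.matMem_updateCol_mulVec hF rfl ?_)⟩
  rintro (j | j)
  exacts [sub_mem (hT j c) (hS j c), zero_mem _]

end IsGrMatrixPreideal

namespace IsGrPrimeMatrixIdeal

variable {I : Set (SqMat R)} [IsMulGraded 𝒜]

lemma not_matMem_one [Finite ι] [DecidableEq ι] (hI : IsGrPrimeMatrixIdeal 𝒜 I) :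
    ¬ MatMem I (1 : Matrix ι ι R) := by
  have one_notMem (n : ℕ) : (⟨n, 1⟩ : SqMat R) ∉ I := by
    induction n with
    | zero =>
      exact fun h => hI.pm5 (hI.isGrMatrixPreideal.mem_of_permClass_eq_add (q := ⟨1, 1⟩) h
        ⟨1, 1, HasDistribution.one⟩ (by rw [permClass_eq_zero ⟨0, 1⟩ rfl, zero_add]))
    | succ n ih =>
      have hone (k : ℕ) : IsHomogSq 𝒜 (1 : Matrix (Fin k) (Fin k) R) :=
        ⟨1, 1, HasDistribution.one⟩
      refine fun h => (hI.pm4 1 1 (hone n) (hone 1)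
        (hI.isGrMatrixPreideal.mem_of_permClass_eq h ?_)).elim ih hI.pm5
      rw [permClass_diagSum, permClass_one n, ← succ_nsmul, ← permClass_one]
  obtain ⟨n, ⟨e⟩⟩ := Finite.exists_equiv_fin ι
  rw [hI.isGrMatrixPreideal.matMem_iff_submatrix_mem e.symm e.symm, submatrix_one_equiv]
  exact one_notMem n

lemma matMem_fromBlocks_zero₂₁_iff [Finite ι] [Finite κ] (hI : IsGrPrimeMatrixIdeal 𝒜 I)
    {C : Matrix ι κ R} (hA : HasDistribution 𝒜 A α β) (hC : HasDistribution 𝒜 C α β')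
    (hD : HasDistribution 𝒜 D α' β') :
    MatMem I (fromBlocks A C 0 D) ↔ MatMem I A ∨ MatMem I D := by
  have hI' := hI.isGrMatrixPreideal
  refine ⟨fun h => ?_, fun h => hI'.matMem_fromBlocks_of_zero₂₁ hA .zero hC hD (h.elim
    (hI'.matMem_fromBlocks_left · hD) (hI'.matMem_fromBlocks_right hA ·))⟩
  obtain ⟨m, ⟨e⟩⟩ := Finite.exists_equiv_fin ι
  obtain ⟨n, ⟨f⟩⟩ := Finite.exists_equiv_fin κ
  rw [hI'.matMem_iff_submatrix_mem e.symm e.symm, hI'.matMem_iff_submatrix_mem f.symm f.symm]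
  refine hI.pm4 _ _ ⟨_, _, hA.submatrix _ _⟩ ⟨_, _, hD.submatrix _ _⟩ ?_
  obtain ⟨p, hp, hADp⟩ := hI'.matMem_fromBlocks_of_zero₂₁ hA hC .zero hD h
  exact hI'.mem_of_permEquiv hp (((PermEquiv.diagSum _ _).trans
    ((PermEquiv.submatrix _ _ _).fromBlocks (.submatrix _ _ _))).trans hADp)

lemma matMem_fromBlocks_zero₁₂_iff [Finite ι] [Finite κ] (hI : IsGrPrimeMatrixIdeal 𝒜 I)
    {C : Matrix κ ι R} (hA : HasDistribution 𝒜 A α β) (hC : HasDistribution 𝒜 C α' β)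
    (hD : HasDistribution 𝒜 D α' β') :
    MatMem I (fromBlocks A 0 C D) ↔ MatMem I A ∨ MatMem I D := by
  rw [or_comm, ← hI.matMem_fromBlocks_zero₂₁_iff hD hC hA,
    ← fromBlocks_submatrix_sum_swap_sum_swap A 0 C D, Iff.comm]
  exact matMem_submatrix_iff (A := fromBlocks A 0 C D) (Equiv.sumComm κ ι) (Equiv.sumComm κ ι)

lemma matMem_fromBlocks_colOp_iff [Fintype ι] [Finite κ] (hI : IsGrPrimeMatrixIdeal 𝒜 I)
    {B : Matrix ι κ R} {C : Matrix κ ι R} {T : Matrix ι κ R} (hA : HasDistribution 𝒜 A α β)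
    (hB : HasDistribution 𝒜 B α β') (hC : HasDistribution 𝒜 C α' β)
    (hD : HasDistribution 𝒜 D α' β') (hT : HasDistribution 𝒜 T β β') :
    MatMem I (fromBlocks A (B + A * T) C (D + C * T)) ↔ MatMem I (fromBlocks A B C D) := by
  have hI' := hI.isGrMatrixPreideal
  refine ⟨fun h => ?_, hI'.matMem_fromBlocks_colOp hA hB hC hD hT⟩
  simpa using hI'.matMem_fromBlocks_colOp hA (hB.add (hA.mul hT)) hC (hD.add (hC.mul hT)) hT.neg h

lemma matMem_mul_or_neg_one_iff [Fintype ι] [DecidableEq ι] (hI : IsGrPrimeMatrixIdeal 𝒜 I)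
    {lam : ι → Γ} {B : Matrix ι ι R} (hA : HasDistribution 𝒜 A α lam)
    (hB : HasDistribution 𝒜 B lam β) :
    MatMem I (A * B) ∨ MatMem I (-1 : Matrix ι ι R) ↔ MatMem I A ∨ MatMem I B := by
  have hone : HasDistribution 𝒜 (-1 : Matrix ι ι R) lam lam := HasDistribution.one.neg
  rw [← hI.matMem_fromBlocks_zero₁₂_iff hA hone hB,
    ← hI.matMem_fromBlocks_colOp_iff hA .zero hone hB hB,
    ← hI.matMem_fromBlocks_zero₂₁_iff (hA.mul hB) hA hone,
    ← matMem_submatrix_iff (Equiv.refl (ι ⊕ ι)) (Equiv.sumComm ι ι)]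
  refine iff_of_eq (congrArg _ ?_)
  ext (i | i) (j | j) <;> simp

theorem matMem_mul_iff [Fintype ι] (hI : IsGrPrimeMatrixIdeal 𝒜 I)
    {lam : ι → Γ} {B : Matrix ι ι R} (hA : HasDistribution 𝒜 A α lam)
    (hB : HasDistribution 𝒜 B lam β) : MatMem I (A * B) ↔ MatMem I A ∨ MatMem I B := by
  classical
  have hone : HasDistribution 𝒜 (1 : Matrix ι ι R) 1 1 := .one
  have hneg : ¬ MatMem I (-1 : Matrix ι ι R) := fun h =>
    (or_self_iff.1 ((hI.matMem_mul_or_neg_one_iff hone hone).1 (.inr h))) |> hI.not_matMem_one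
  rw [← hI.matMem_mul_or_neg_one_iff hA hB, or_iff_left hneg]

end IsGrPrimeMatrixIdeal

end DiagIdealMembership

/-! ### Homogeneous fractions -/

section Fractions

variable {Γ : Type u} [Group Γ] {R : Type v} [Ring R] {𝒜 : Γ → AddSubgroup R} {I : Set (SqMat R)}
variable {γ δ ε : Γ} {ι κ τ ι' κ' : Type*}

namespace HasDistribution

variable {α : ι → Γ} {β : κ → Γ} {α' : ι' → Γ} {β' : κ' → Γ}

lemma fromRows {A : Matrix ι κ R} {B : Matrix ι' κ R} (hA : HasDistribution 𝒜 A α β)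
    (hB : HasDistribution 𝒜 B α' β) : HasDistribution 𝒜 (fromRows A B) (Sum.elim α α') β := by
  rintro (i | i) j
  exacts [hA i j, hB i j]

lemma fromCols {A : Matrix ι κ R} {B : Matrix ι κ' R} (hA : HasDistribution 𝒜 A α β)
    (hB : HasDistribution 𝒜 B α β') : HasDistribution 𝒜 (fromCols A B) α (Sum.elim β β') := by
  rintro i (j | j)
  exacts [hA i j, hB i j]

end HasDistribution

variable (𝒜 I γ ι) in
/-- A formal homogeneous fraction `row * den⁻¹ * col` of degree `γ` whose denominator lies
outside `I`; these represent the homogeneous elements of the graded division ring attached to a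
gr-prime matrix ideal `I`. -/
structure GrFraction where
  den : Matrix ι ι R
  row : Matrix Unit ι R
  col : Matrix ι Unit R
  rowDeg : ι → Γ
  colDeg : ι → Γ
  den_hom : HasDistribution 𝒜 den rowDeg colDeg
  row_hom : HasDistribution 𝒜 row (fun _ => γ) colDeg
  col_hom : HasDistribution 𝒜 col rowDeg fun _ => 1
  den_notMem : ¬ MatMem I den

namespace GrFraction

/-- The matrix with Schur complement `row * den⁻¹ * col`. -/
def bordered (u : GrFraction 𝒜 I γ ι) : Matrix (ι ⊕ Unit) (ι ⊕ Unit) R :=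
  fromBlocks u.den (-u.col) u.row 0

/-- The fraction represents `0`. -/
def IsNull (u : GrFraction 𝒜 I γ ι) : Prop :=
  MatMem I u.bordered

lemma bordered_hom (u : GrFraction 𝒜 I γ ι) :
    HasDistribution 𝒜 u.bordered (Sum.elim u.rowDeg fun _ => γ) (Sum.elim u.colDeg fun _ => 1) :=
  u.den_hom.fromBlocks u.col_hom.neg u.row_hom .zero

lemma matMem_fromBlocks_col_add [Finite ι] (hI : IsGrMatrixPreideal 𝒜 I)
    (u : GrFraction 𝒜 I γ ι) {x y : Matrix ι Unit R}
    (hx : HasDistribution 𝒜 x u.rowDeg fun _ => 1) (hy : HasDistribution 𝒜 y u.rowDeg fun _ => 1)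
    (hux : MatMem I (fromBlocks u.den x u.row 0)) (huy : MatMem I (fromBlocks u.den y u.row 0)) :
    MatMem I (fromBlocks u.den (x + y) u.row 0) := by
  refine hI.matMem_of_isColSum (c := Sum.inr ()) hux huy
    (u.den_hom.fromBlocks hx u.row_hom .zero) (u.den_hom.fromBlocks hy u.row_hom .zero) ⟨?_, ?_⟩
  · rintro (i | i) (j | j) hj <;> simp at hj ⊢
  · rintro (i | i) <;> simp

/-- A homomorphism from the presentation `u` to the presentation `v` of a fraction: the equations
`P * u.den = v.den * Q`, `u.row = v.row * Q` and `P * u.col = v.col` give both fractions the same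
value. -/
def Intertwines (u : GrFraction 𝒜 I γ ι) (v : GrFraction 𝒜 I δ κ) [Fintype ι] [Fintype κ] : Prop :=
  ∃ P Q : Matrix κ ι R, HasDistribution 𝒜 P v.rowDeg u.rowDeg ∧
    HasDistribution 𝒜 Q v.colDeg u.colDeg ∧ P * u.den = v.den * Q ∧ u.row = v.row * Q ∧
      P * u.col = v.col

lemma intertwines_of_equiv [IsMulGraded 𝒜] [Fintype ι] [Fintype κ] {u : GrFraction 𝒜 I γ ι}
    {v : GrFraction 𝒜 I δ κ} (e : ι ≃ κ) (hden : u.den = v.den.submatrix e e)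
    (hrow : u.row = v.row.submatrix id e) (hcol : u.col = v.col.submatrix e id)
    (hrowDeg : u.rowDeg = v.rowDeg ∘ e) (hcolDeg : u.colDeg = v.colDeg ∘ e) :
    u.Intertwines v := by
  classical
  let P := (1 : Matrix κ κ R).submatrix id e
  have hP (d : κ → Γ) : HasDistribution 𝒜 P d (d ∘ e) := HasDistribution.one.submatrix id e
  refine ⟨P, P, hrowDeg ▸ hP _, hcolDeg ▸ hP _, ?_, ?_, ?_⟩
  · rw [one_submatrix_mul, hden]
    exact Eq.symm (by simpa using mul_submatrix_one (Equiv.refl κ) e v.den)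
  · rw [hrow]
    exact (mul_submatrix_one (Equiv.refl κ) e v.row).symm
  · rw [one_submatrix_mul, hcol]
    simp

instance : InvolutiveNeg (GrFraction 𝒜 I γ ι) where
  neg u := { u with col := -u.col, col_hom := u.col_hom.neg }
  neg_neg u := by simp only [neg_neg]

@[simp] lemma den_neg (u : GrFraction 𝒜 I γ ι) : (-u).den = u.den := rfl

@[simp] lemma row_neg (u : GrFraction 𝒜 I γ ι) : (-u).row = u.row := rfl

@[simp] lemma col_neg (u : GrFraction 𝒜 I γ ι) : (-u).col = -u.col := rfl

variable [IsMulGraded 𝒜] [hI : Fact (IsGrPrimeMatrixIdeal 𝒜 I)]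

instance [Finite ι] [Finite κ] :
    HAdd (GrFraction 𝒜 I γ ι) (GrFraction 𝒜 I γ κ) (GrFraction 𝒜 I γ (ι ⊕ κ)) where
  hAdd u v :=
    { den := fromBlocks u.den 0 0 v.den
      row := fromCols u.row v.row
      col := fromRows u.col v.col
      rowDeg := Sum.elim u.rowDeg v.rowDeg
      colDeg := Sum.elim u.colDeg v.colDeg
      den_hom := u.den_hom.blockDiag v.den_hom
      row_hom := u.row_hom.fromCols v.row_hom
      col_hom := u.col_hom.fromRows v.col_hom
      den_notMem := fun h => ((hI.out.matMem_fromBlocks_zero₂₁_iff u.den_hom .zero v.den_hom).1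
        h).elim u.den_notMem v.den_notMem }

instance [Finite ι] [Finite κ] :
    HMul (GrFraction 𝒜 I γ ι) (GrFraction 𝒜 I δ κ) (GrFraction 𝒜 I (γ * δ) (ι ⊕ κ)) where
  hMul u v :=
    have hcorner : HasDistribution 𝒜 (-(u.col * v.row)) (fun i => u.rowDeg i * δ) v.colDeg := by
      simpa using ((u.col_hom.mul_right δ).mul (by simpa using v.row_hom)).neg
    { den := fromBlocks u.den (-(u.col * v.row)) 0 v.den
      row := fromCols u.row 0
      col := fromRows 0 v.col
      rowDeg := Sum.elim (fun i => u.rowDeg i * δ) v.rowDeg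
      colDeg := Sum.elim (fun i => u.colDeg i * δ) v.colDeg
      den_hom := (u.den_hom.mul_right δ).fromBlocks hcorner .zero v.den_hom
      row_hom := (u.row_hom.mul_right δ).fromCols .zero
      col_hom := HasDistribution.zero.fromRows v.col_hom
      den_notMem := fun h => ((hI.out.matMem_fromBlocks_zero₂₁_iff (u.den_hom.mul_right δ) hcorner
        v.den_hom).1 h).elim u.den_notMem v.den_notMem }

section Projections

variable [Finite ι] [Finite κ] (u : GrFraction 𝒜 I γ ι)

@[simp] lemma den_add (v : GrFraction 𝒜 I γ κ) : (u + v).den = fromBlocks u.den 0 0 v.den := rfl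

@[simp] lemma row_add (v : GrFraction 𝒜 I γ κ) : (u + v).row = fromCols u.row v.row := rfl

@[simp] lemma col_add (v : GrFraction 𝒜 I γ κ) : (u + v).col = fromRows u.col v.col := rfl

@[simp] lemma den_mul (v : GrFraction 𝒜 I δ κ) :
    (u * v).den = fromBlocks u.den (-(u.col * v.row)) 0 v.den := rfl

@[simp] lemma row_mul (v : GrFraction 𝒜 I δ κ) : (u * v).row = fromCols u.row 0 := rfl

@[simp] lemma col_mul (v : GrFraction 𝒜 I δ κ) : (u * v).col = fromRows 0 v.col := rfl

lemma rowDeg_mul (v : GrFraction 𝒜 I δ κ) :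
    (u * v).rowDeg = Sum.elim (fun i => u.rowDeg i * δ) v.rowDeg := rfl

lemma colDeg_mul (v : GrFraction 𝒜 I δ κ) :
    (u * v).colDeg = Sum.elim (fun i => u.colDeg i * δ) v.colDeg := rfl

end Projections

section Null

variable {u : GrFraction 𝒜 I γ ι} {v : GrFraction 𝒜 I γ κ}

lemma isNull_neg [Finite ι] (hu : u.IsNull) : (-u).IsNull := by
  classical
  cases nonempty_fintype ι
  have factor : (-u).bordered = u.bordered * fromBlocks 1 0 0 (-1) := by
    simp [bordered, fromBlocks_multiply]
  rw [IsNull, factor]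
  exact (hI.out.matMem_mul_iff u.bordered_hom
    (HasDistribution.one.blockDiag HasDistribution.one.neg)).2 (.inl hu)

lemma isNull_add_neg_of_intertwines [Fintype ι] [Fintype κ] (h : u.Intertwines v) :
    (u + -v).IsNull := by
  classical
  obtain ⟨P, Q, hP, hQ, hden, hrow, hcol⟩ := h
  have factor : (u + -v).bordered =
      fromRows (fromBlocks 1 0 (-P) v.den) (fromCols 0 v.row) *
        fromCols (fromBlocks u.den 0 Q 1) (fromRows (-u.col) 0) := by
    simp [bordered, fromBlocks_multiply, fromBlocks_mul_fromRows,
      fromCols_mul_fromBlocks, fromCols_mul_fromRows, hden, hcol, hrow, fromRows_neg]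
  rw [IsNull, factor]
  refine hI.out.isGrMatrixPreideal.matMem_mul
    ((HasDistribution.one.fromBlocks .zero hP.neg v.den_hom).fromRows
      (HasDistribution.zero.fromCols v.row_hom))
    ((u.den_hom.fromBlocks .zero hQ .one).fromCols
      (u.col_hom.neg.fromRows .zero)) ?_
  simp

lemma isNull_of_row_eq_zero [Finite ι] (h : u.row = 0) : u.IsNull := by
  classical
  cases nonempty_fintype ι
  let X : Matrix (ι ⊕ Unit) ι R := fromRows 1 0
  have hX : HasDistribution 𝒜 X (Sum.elim u.rowDeg fun _ => γ) u.rowDeg :=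
    HasDistribution.one.fromRows .zero
  have factor : u.bordered = X * fromCols u.den (-u.col) := by
    simp [X, bordered, h, fromRows_mul, ← fromRows_fromCols_eq_fromBlocks]
  rw [IsNull, factor]
  exact hI.out.isGrMatrixPreideal.matMem_mul hX (u.den_hom.fromCols u.col_hom.neg) (by simp)

variable [Finite ι] [Finite κ]

variable (u v) in
lemma matMem_bordered_left_iff :
    MatMem I (fromBlocks (u + v).den (fromRows (-u.col) 0) (u + v).row 0) ↔ u.IsNull := by
  let e := (Equiv.sumAssoc ι Unit κ).trans
    (((Equiv.refl ι).sumCongr (Equiv.sumComm Unit κ)).trans (Equiv.sumAssoc ι κ Unit).symm)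
  have blocks : (fromBlocks (u + v).den (fromRows (-u.col) 0) (u + v).row 0).submatrix e e =
      fromBlocks u.bordered (fromRows 0 v.row) 0 v.den := by
    ext ((i | i) | i) ((j | j) | j) <;> rfl
  rw [← matMem_submatrix_iff e e, blocks, hI.out.matMem_fromBlocks_zero₂₁_iff u.bordered_hom
    (HasDistribution.zero.fromRows v.row_hom) v.den_hom, or_iff_left v.den_notMem]
  rfl

variable (u v) in
lemma matMem_bordered_right_iff :
    MatMem I (fromBlocks (u + v).den (fromRows 0 (-v.col)) (u + v).row 0) ↔ v.IsNull := by
  let e := (Equiv.sumAssoc ι κ Unit).symm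
  have blocks : (fromBlocks (u + v).den (fromRows 0 (-v.col)) (u + v).row 0).submatrix e e =
      fromBlocks u.den 0 (fromRows 0 u.row) v.bordered := by
    ext (i | i | i) (j | j | j) <;> rfl
  rw [← matMem_submatrix_iff e e, blocks, hI.out.matMem_fromBlocks_zero₁₂_iff u.den_hom
    (HasDistribution.zero.fromRows u.row_hom) v.bordered_hom, or_iff_right u.den_notMem]
  rfl

lemma isNull_add_iff (hv : v.IsNull) : (u + v).IsNull ↔ u.IsNull := by
  have hl : HasDistribution 𝒜 (fromRows (-u.col) 0) (u + v).rowDeg fun _ => 1 :=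
    u.col_hom.neg.fromRows .zero
  have hr : HasDistribution 𝒜 (fromRows 0 (-v.col)) (u + v).rowDeg fun _ => 1 :=
    HasDistribution.zero.fromRows v.col_hom.neg
  have hr' : HasDistribution 𝒜 (fromRows 0 (- -v.col)) (u + v).rowDeg fun _ => 1 :=
    HasDistribution.zero.fromRows v.col_hom.neg.neg
  constructor
  · intro h
    have key := matMem_fromBlocks_col_add hI.out.isGrMatrixPreideal (u + v) (u + v).col_hom.neg
      hr' h ((matMem_bordered_right_iff u (-v)).2 (isNull_neg hv))
    rw [← matMem_bordered_left_iff u v]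
    convert key using 2
    ext (i | i) j <;> simp
  · intro h
    have key := matMem_fromBlocks_col_add hI.out.isGrMatrixPreideal (u + v) hl hr
      ((matMem_bordered_left_iff u v).2 h) ((matMem_bordered_right_iff u v).2 hv)
    rw [IsNull, bordered]
    convert key using 2
    ext (i | i) j <;> simp

end Null

section Equivalence

variable {u : GrFraction 𝒜 I γ ι} {v : GrFraction 𝒜 I γ κ} {w : GrFraction 𝒜 I γ τ}

/-- The fractions `u` and `v` have the same value. -/
def ValueEq [Finite ι] [Finite κ] (u : GrFraction 𝒜 I γ ι) (v : GrFraction 𝒜 I γ κ) : Prop :=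
  (u + -v).IsNull

lemma Intertwines.valueEq [Fintype ι] [Fintype κ] (h : u.Intertwines v) : u.ValueEq v :=
  isNull_add_neg_of_intertwines h

variable [Finite ι] [Finite κ] [Finite τ]

lemma ValueEq.refl (u : GrFraction 𝒜 I γ ι) : u.ValueEq u := by
  cases nonempty_fintype ι
  exact (intertwines_of_equiv (.refl ι) rfl rfl rfl rfl rfl).valueEq

lemma ValueEq.isNull (h : u.ValueEq v) (hv : v.IsNull) : u.IsNull :=
  (isNull_add_iff (isNull_neg hv)).1 h

lemma ValueEq.symm (h : u.ValueEq v) : v.ValueEq u := by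
  cases nonempty_fintype ι
  cases nonempty_fintype κ
  refine ValueEq.isNull (Intertwines.valueEq ?_) (isNull_neg h)
  refine intertwines_of_equiv (Equiv.sumComm κ ι) ?_ ?_ ?_ ?_ ?_
  · ext (i | i) (j | j) <;> rfl
  · ext i (j | j) <;> rfl
  · ext (i | i) j <;> simp
  · ext (i | i) <;> rfl
  · ext (i | i) <;> rfl

lemma ValueEq.trans (h : u.ValueEq v) (h' : v.ValueEq w) : u.ValueEq w := by
  cases nonempty_fintype ι
  cases nonempty_fintype κ
  cases nonempty_fintype τ
  have hv : (-v + v).IsNull := by simpa only [ValueEq, neg_neg] using ValueEq.refl (-v)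
  refine (isNull_add_iff hv).1 (ValueEq.isNull (Intertwines.valueEq ?_)
    ((isNull_add_iff h').2 h))
  refine intertwines_of_equiv ((Equiv.sumSumSumComm ι τ κ κ).trans
    ((Equiv.refl _).sumCongr (Equiv.sumComm τ κ))) ?_ ?_ ?_ ?_ ?_
  · ext ((i | i) | i | i) ((j | j) | j | j) <;> rfl
  · ext i ((j | j) | j | j) <;> rfl
  · ext ((i | i) | i | i) j <;> rfl
  · ext ((i | i) | i | i) <;> rfl
  · ext ((i | i) | i | i) <;> rfl

lemma ValueEq.neg (h : u.ValueEq v) : (-u).ValueEq (-v) := by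
  have hneg : (-u + - -v).bordered = (-(u + -v)).bordered := by
    simp [bordered, fromRows_neg]
  rw [ValueEq, IsNull, hneg]
  exact isNull_neg h

lemma ValueEq.add [Finite ι'] [Finite κ'] {u' : GrFraction 𝒜 I γ ι'} {v' : GrFraction 𝒜 I γ κ'}
    (h : u.ValueEq u') (h' : v.ValueEq v') : (u + v).ValueEq (u' + v') := by
  cases nonempty_fintype ι
  cases nonempty_fintype κ
  cases nonempty_fintype ι'
  cases nonempty_fintype κ'
  refine ValueEq.isNull (Intertwines.valueEq ?_) ((isNull_add_iff h').2 h)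
  refine intertwines_of_equiv (Equiv.sumSumSumComm ι κ ι' κ') ?_ ?_ ?_ ?_ ?_
  · ext ((i | i) | i | i) ((j | j) | j | j) <;> rfl
  · ext i ((j | j) | j | j) <;> rfl
  · ext ((i | i) | i | i) j <;> rfl
  · ext ((i | i) | i | i) <;> rfl
  · ext ((i | i) | i | i) <;> rfl

end Equivalence

end GrFraction

end Fractions

section FromRowsFromCols

variable {R : Type*} [AddZeroClass R] {ι κ ι' κ' : Type*}

lemma fromRows_zero_add_zero_fromRows (A : Matrix ι κ R) (B : Matrix ι' κ R) :
    fromRows A 0 + fromRows 0 B = fromRows A B := by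
  ext (i | i) j <;> simp

lemma fromCols_zero_add_zero_fromCols (A : Matrix ι κ R) (B : Matrix ι κ' R) :
    fromCols A 0 + fromCols 0 B = fromCols A B := by
  ext i (j | j) <;> simp

end FromRowsFromCols

section FractionArithmetic

variable {Γ : Type u} [Group Γ] {R : Type v} [Ring R] {𝒜 : Γ → AddSubgroup R} {I : Set (SqMat R)}
variable {γ δ ε : Γ} {ι κ τ ι' κ' : Type*}

variable [IsMulGraded 𝒜] [hI : Fact (IsGrPrimeMatrixIdeal 𝒜 I)]

namespace GrFraction

lemma isNull_mul_iff [Finite ι] [Finite κ] {u : GrFraction 𝒜 I γ ι} {v : GrFraction 𝒜 I δ κ} :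
    (u * v).IsNull ↔ u.IsNull ∨ v.IsNull := by
  classical
  cases nonempty_fintype ι
  cases nonempty_fintype κ
  let e : ι ⊕ κ ⊕ Unit ≃ (ι ⊕ κ) ⊕ Unit := (Equiv.sumAssoc ι κ Unit).symm
  let f : ι ⊕ κ ⊕ Unit ≃ (ι ⊕ Unit) ⊕ κ :=
    ((Equiv.refl ι).sumCongr (Equiv.sumComm κ Unit)).trans (Equiv.sumAssoc ι Unit κ).symm
  let X := fromBlocks u.bordered 0 0 (1 : Matrix κ κ R)
  let Y := fromBlocks (1 : Matrix ι ι R) 0 0 v.bordered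
  have factor : (u * v).bordered.submatrix e e = X.submatrix f f * Y := by
    have blocks : X.submatrix f f =
        fromBlocks u.den (fromCols 0 (-u.col)) (fromRows 0 u.row) (fromBlocks 1 0 0 0) := by
      ext (i | i | i) (j | j | j) <;> rfl
    rw [blocks, fromBlocks_multiply]
    ext (i | i | i) (j | j | j) <;>
      simp [e, bordered, fromCols_mul_fromBlocks, fromBlocks_multiply]
  have hX := (u.bordered_hom.mul_right δ).blockDiag (HasDistribution.one (α := v.rowDeg))
  have hXf : HasDistribution 𝒜 (X.submatrix f f)
      (Sum.elim (fun i => Sum.elim u.rowDeg (fun _ => γ) i * δ) v.rowDeg ∘ f)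
      (Sum.elim (fun i => u.colDeg i * δ) (Sum.elim v.rowDeg fun _ => δ)) := by
    convert hX.submatrix f f using 1
    ext (j | j | j) <;> simp [f]
  have hY : HasDistribution 𝒜 Y (Sum.elim (fun i => u.colDeg i * δ) (Sum.elim v.rowDeg fun _ => δ))
      (Sum.elim (fun i => u.colDeg i * δ) (Sum.elim v.colDeg fun _ => 1)) :=
    HasDistribution.one.blockDiag v.bordered_hom
  rw [IsNull, ← matMem_submatrix_iff e e, factor, hI.out.matMem_mul_iff hXf hY]
  refine or_congr ?_ ?_
  · rw [matMem_submatrix_iff f f,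
      hI.out.matMem_fromBlocks_zero₂₁_iff (u.bordered_hom.mul_right δ) .zero
        (HasDistribution.one (α := v.rowDeg)), or_iff_left hI.out.not_matMem_one, IsNull]
  · rw [hI.out.matMem_fromBlocks_zero₂₁_iff (HasDistribution.one (α := u.colDeg)) .zero
        v.bordered_hom, or_iff_right hI.out.not_matMem_one, IsNull]

section Morphisms

variable [Fintype ι] [Fintype κ] [Fintype τ] [Fintype ι'] [Fintype κ']

lemma intertwines_add_mul (u : GrFraction 𝒜 I γ ι)
    (u' : GrFraction 𝒜 I γ ι') (v : GrFraction 𝒜 I δ κ) :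
    ((u + u') * v).Intertwines (u * v + u' * v) := by
  classical
  let P : Matrix ((ι ⊕ κ) ⊕ ι' ⊕ κ) ((ι ⊕ ι') ⊕ κ) R :=
    fromBlocks (fromBlocks 1 0 0 0) (fromRows 0 1) (fromBlocks 0 1 0 0) (fromRows 0 1)
  have hP (α : ι → Γ) (α' : ι' → Γ) (α'' : κ → Γ) :
      HasDistribution 𝒜 P (Sum.elim (Sum.elim (fun i => α i * δ) α'')
        (Sum.elim (fun i => α' i * δ) α''))
        (Sum.elim (fun i => Sum.elim α α' i * δ) α'') := by
    have hdeg : (fun i => Sum.elim α α' i * δ) =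
        Sum.elim (fun i => α i * δ) (fun i => α' i * δ) := by
      ext (i | i) <;> rfl
    rw [hdeg]
    exact HasDistribution.fromBlocks (.fromBlocks .one .zero .zero .zero) (.fromRows .zero .one)
      (.fromBlocks .zero .one .zero .zero) (.fromRows .zero .one)
  refine ⟨P, P, hP _ _ _, hP _ _ _, ?_, ?_, ?_⟩
  · simp [P, fromBlocks_multiply, fromBlocks_mul_fromRows, fromRows_mul,
      fromRows_zero_add_zero_fromRows]
  · simp [P, fromCols_mul_fromBlocks, fromCols_mul_fromRows, fromCols_zero_add_zero_fromCols]
  · simp [P, fromBlocks_mul_fromRows, fromRows_mul]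

lemma intertwines_mul_add (u : GrFraction 𝒜 I γ ι)
    (v : GrFraction 𝒜 I δ κ) (v' : GrFraction 𝒜 I δ κ') :
    (u * v + u * v').Intertwines (u * (v + v')) := by
  classical
  let P : Matrix (ι ⊕ κ ⊕ κ') ((ι ⊕ κ) ⊕ ι ⊕ κ') R :=
    fromBlocks (fromCols 1 0) (fromCols 1 0) (fromBlocks 0 1 0 0) (fromBlocks 0 0 0 1)
  have hP (α : ι → Γ) (α' : κ → Γ) (α'' : κ' → Γ) :
      HasDistribution 𝒜 P (Sum.elim α (Sum.elim α' α''))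
        (Sum.elim (Sum.elim α α') (Sum.elim α α'')) :=
    HasDistribution.fromBlocks (.fromCols .one .zero) (.fromCols .one .zero)
      (.fromBlocks .zero .one .zero .zero) (.fromBlocks .zero .zero .zero .one)
  refine ⟨P, P, hP _ _ _, hP _ _ _, ?_, ?_, ?_⟩
  · simp [P, fromBlocks_multiply, fromCols_mul_fromBlocks, fromCols_zero_add_zero_fromCols]
  · simp [P, fromCols_mul_fromBlocks]
  · simp [P, fromBlocks_mul_fromRows, fromCols_mul_fromRows, fromRows_zero_add_zero_fromRows]

lemma intertwines_mul_assoc (u : GrFraction 𝒜 I γ ι) (v : GrFraction 𝒜 I δ κ)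
    (w : GrFraction 𝒜 I ε τ) : (u * v * w).Intertwines (u * (v * w)) := by
  refine intertwines_of_equiv (Equiv.sumAssoc ι κ τ) ?_ ?_ ?_ ?_ ?_
  · ext ((i | i) | i) ((j | j) | j) <;> simp
  · ext _ ((_ | _) | _) <;> simp
  · ext ((_ | _) | _) _ <;> simp
  · ext ((i | i) | i) <;> simp [rowDeg_mul, mul_assoc]
  · ext ((i | i) | i) <;> simp [colDeg_mul, mul_assoc]

lemma intertwines_add_comm (u : GrFraction 𝒜 I γ ι) (v : GrFraction 𝒜 I γ κ) :
    (u + v).Intertwines (v + u) := by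
  refine intertwines_of_equiv (Equiv.sumComm ι κ) ?_ ?_ ?_ ?_ ?_
  · ext (i | i) (j | j) <;> rfl
  · ext i (j | j) <;> rfl
  · ext (i | i) j <;> rfl
  · ext (i | i) <;> rfl
  · ext (i | i) <;> rfl

lemma intertwines_add_assoc (u : GrFraction 𝒜 I γ ι) (v : GrFraction 𝒜 I γ κ)
    (w : GrFraction 𝒜 I γ τ) : (u + v + w).Intertwines (u + (v + w)) := by
  refine intertwines_of_equiv (Equiv.sumAssoc ι κ τ) ?_ ?_ ?_ ?_ ?_
  · ext ((i | i) | i) ((j | j) | j) <;> rfl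
  · ext i ((j | j) | j) <;> rfl
  · ext ((i | i) | i) j <;> rfl
  · ext ((i | i) | i) <;> rfl
  · ext ((i | i) | i) <;> rfl

end Morphisms

/-- The fraction `0` with empty denominator. -/
instance : Zero (GrFraction 𝒜 I γ Empty) where
  zero :=
    { den := 1
      row := 0
      col := 0
      rowDeg := nofun
      colDeg := nofun
      den_hom := .one
      row_hom := .zero
      col_hom := .zero
      den_notMem := hI.out.not_matMem_one }

lemma isNull_zero : (0 : GrFraction 𝒜 I γ Empty).IsNull :=
  isNull_of_row_eq_zero rfl

variable (I) in
/-- The fraction `r / 1`. -/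
def ofMem {r : R} (hr : r ∈ 𝒜 γ) : GrFraction 𝒜 I γ Unit where
  den := 1
  row := diagonal fun _ => r
  col := 1
  rowDeg _ := 1
  colDeg _ := 1
  den_hom := .one
  row_hom _ _ := by simpa using hr
  col_hom := .one
  den_notMem := hI.out.not_matMem_one

instance : One (GrFraction 𝒜 I 1 Unit) where
  one := ofMem I IsMulGraded.one_mem

lemma row_one : (1 : GrFraction 𝒜 I 1 Unit).row = 1 :=
  diagonal_one

lemma not_isNull_one : ¬ (1 : GrFraction 𝒜 I 1 Unit).IsNull := by
  have hone : HasDistribution 𝒜 (1 : Matrix Unit Unit R) (fun _ => 1) fun _ => 1 := .one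
  have hbordered : (1 : GrFraction 𝒜 I 1 Unit).bordered =
      fromBlocks 1 (0 + 1 * -1) 1 (1 + 1 * -1) := by
    have hden : (1 : GrFraction 𝒜 I 1 Unit).den = 1 := rfl
    have hcol : (1 : GrFraction 𝒜 I 1 Unit).col = 1 := rfl
    simp [bordered, row_one, hden, hcol]
  rw [IsNull, hbordered, hI.out.matMem_fromBlocks_colOp_iff hone .zero hone hone hone.neg,
    hI.out.matMem_fromBlocks_zero₁₂_iff hone hone hone, or_self]
  exact hI.out.not_matMem_one

/-- The fraction with the denominator and the column of `u`, and with row `f`. -/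
def withRow (u : GrFraction 𝒜 I γ ι) (f : Matrix Unit ι R)
    (hf : HasDistribution 𝒜 f (fun _ => δ) u.colDeg) : GrFraction 𝒜 I δ ι :=
  { u with row := f, row_hom := hf }

section Morphisms

variable [Fintype ι] (u : GrFraction 𝒜 I γ ι)

lemma intertwines_add_zero : (u + (0 : GrFraction 𝒜 I γ Empty)).Intertwines u := by
  refine intertwines_of_equiv (Equiv.sumEmpty ι Empty) ?_ ?_ ?_ ?_ ?_
  · ext (i | ⟨⟨⟩⟩) (j | ⟨⟨⟩⟩)
    rfl
  · ext _ (j | ⟨⟨⟩⟩)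
    rfl
  · ext (i | ⟨⟨⟩⟩) _
    rfl
  · ext (i | ⟨⟨⟩⟩)
    rfl
  · ext (i | ⟨⟨⟩⟩)
    rfl

lemma intertwines_withRow_add {f g : Matrix Unit ι R}
    (hf : HasDistribution 𝒜 f (fun _ => δ) u.colDeg)
    (hg : HasDistribution 𝒜 g (fun _ => δ) u.colDeg) :
    (u.withRow (f + g) (hf.add hg)).Intertwines (u.withRow f hf + u.withRow g hg) := by
  classical
  let P : Matrix (ι ⊕ ι) ι R := fromRows 1 1
  have hP (α : ι → Γ) : HasDistribution 𝒜 P (Sum.elim α α) α := HasDistribution.one.fromRows .one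
  refine ⟨P, P, hP _, hP _, ?_, ?_, ?_⟩
  · simp [P, withRow, fromRows_mul, fromBlocks_mul_fromRows]
  · simp [P, withRow, fromCols_mul_fromRows]
  · simp [P, withRow, fromRows_mul]

lemma withRow_intertwines_ofMem_mul {r : R} (hr : r ∈ 𝒜 δ) {f : Matrix Unit ι R}
    (hf : HasDistribution 𝒜 f (fun _ => ε) u.colDeg) (h : f = r • u.row) :
    (u.withRow f hf).Intertwines (ofMem I hr * u) := by
  classical
  let P : Matrix (Unit ⊕ ι) ι R := fromRows 0 1
  let Q : Matrix (Unit ⊕ ι) ι R := fromRows u.row 1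
  have hP : HasDistribution 𝒜 P (Sum.elim (fun _ => 1 * γ) u.rowDeg) u.rowDeg :=
    HasDistribution.zero.fromRows .one
  have hQ : HasDistribution 𝒜 Q (Sum.elim (fun _ => 1 * γ) u.colDeg) u.colDeg :=
    HasDistribution.fromRows (by simpa using u.row_hom) .one
  refine ⟨P, Q, hP, hQ, ?_, ?_, ?_⟩
  · simp [P, Q, withRow, ofMem, fromRows_mul, fromBlocks_mul_fromRows]
  · simp [Q, withRow, ofMem, h, fromCols_mul_fromRows, smul_eq_diagonal_mul]
  · simp [P, withRow, fromRows_mul]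

lemma intertwines_one_mul : u.Intertwines ((1 : GrFraction 𝒜 I 1 Unit) * u) :=
  u.withRow_intertwines_ofMem_mul IsMulGraded.one_mem u.row_hom (one_smul R u.row).symm

lemma intertwines_mul_one : (u * (1 : GrFraction 𝒜 I 1 Unit)).Intertwines u := by
  classical
  let P : Matrix ι (ι ⊕ Unit) R := fromCols 1 u.col
  let Q : Matrix ι (ι ⊕ Unit) R := fromCols 1 0
  have hP : HasDistribution 𝒜 P u.rowDeg (Sum.elim (fun i => u.rowDeg i * 1) fun _ => 1) :=
    HasDistribution.fromCols (by simpa using HasDistribution.one) u.col_hom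
  have hQ : HasDistribution 𝒜 Q u.colDeg (Sum.elim (fun i => u.colDeg i * 1) fun _ => 1) :=
    HasDistribution.fromCols (by simpa using HasDistribution.one) .zero
  refine ⟨P, Q, hP, hQ, ?_, ?_, ?_⟩
  · have hden : (1 : GrFraction 𝒜 I 1 Unit).den = 1 := rfl
    simp [P, Q, hden, row_one, fromCols_mul_fromBlocks]
  · simp [Q]
  · have hcol : (1 : GrFraction 𝒜 I 1 Unit).col = 1 := rfl
    simp [P, hcol, fromCols_mul_fromRows]

/-- The fraction `(u.row * u.den⁻¹ * u.col)⁻¹`. -/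
def inv (u : GrFraction 𝒜 I γ ι) (hu : ¬ u.IsNull) : GrFraction 𝒜 I γ⁻¹ (ι ⊕ Unit) where
  den := u.bordered
  row := fromCols 0 1
  col := fromRows 0 1
  rowDeg i := Sum.elim u.rowDeg (fun _ => γ) i * γ⁻¹
  colDeg i := Sum.elim u.colDeg (fun _ => 1) i * γ⁻¹
  den_hom := u.bordered_hom.mul_right _
  row_hom := by
    rintro _ (j | j)
    · exact zero_mem _
    · simpa using IsMulGraded.one_mem (𝒜 := 𝒜)
  col_hom := by
    rintro (i | i) _
    · exact zero_mem _
    · simpa using IsMulGraded.one_mem (𝒜 := 𝒜)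
  den_notMem := hu

/-- An intermediate presentation of `1`, equal to `u⁻¹ * u` by row elimination. -/
def cancel (u : GrFraction 𝒜 I γ ι) (hu : ¬ u.IsNull) : GrFraction 𝒜 I 1 (ι ⊕ Unit) where
  den := u.bordered
  row := fromCols 0 1
  col := fromRows (-u.col) 0
  rowDeg := Sum.elim u.rowDeg (fun _ => γ)
  colDeg := Sum.elim u.colDeg (fun _ => 1)
  den_hom := u.bordered_hom
  row_hom := HasDistribution.zero.fromCols .one
  col_hom := u.col_hom.neg.fromRows .zero
  den_notMem := hu

lemma one_intertwines_cancel (hu : ¬ u.IsNull) :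
    (1 : GrFraction 𝒜 I 1 Unit).Intertwines (u.cancel hu) := by
  classical
  let P : Matrix (ι ⊕ Unit) Unit R := fromRows (-u.col) 0
  let Q : Matrix (ι ⊕ Unit) Unit R := fromRows 0 1
  have hden : (1 : GrFraction 𝒜 I 1 Unit).den = 1 := rfl
  have hcol : (1 : GrFraction 𝒜 I 1 Unit).col = 1 := rfl
  refine ⟨P, Q, u.col_hom.neg.fromRows .zero, HasDistribution.zero.fromRows .one, ?_, ?_, ?_⟩
  · simp [P, Q, hden, cancel, bordered, fromBlocks_mul_fromRows]
  · simp [Q, row_one, cancel, fromCols_mul_fromRows]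
  · simp [P, hcol, cancel]

lemma inv_mul_intertwines_cancel (hu : ¬ u.IsNull) :
    (u.inv hu * u).Intertwines (u.cancel hu) := by
  classical
  let E : Matrix (ι ⊕ Unit) ι R := fromRows (-1) 0
  let P : Matrix (ι ⊕ Unit) ((ι ⊕ Unit) ⊕ ι) R := fromCols 1 E
  have hP (α : ι → Γ) (ε : Γ) : HasDistribution 𝒜 P (Sum.elim α fun _ => ε)
      (Sum.elim (fun i => Sum.elim α (fun _ => ε) i * γ⁻¹ * γ) α) :=
    HasDistribution.fromCols (by simpa using HasDistribution.one)
      (HasDistribution.one.neg.fromRows .zero)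
  refine ⟨P, P, hP _ _, hP _ _, ?_, ?_, ?_⟩
  · simp [P, E, cancel, inv, bordered, fromCols_mul_fromBlocks, fromBlocks_mul_fromRows,
      fromRows_mul, fromRows_neg, add_comm (fromRows 0 (-u.row)), fromRows_zero_add_zero_fromRows]
  · simp [P, E, cancel, inv, fromCols_mul_fromRows]
  · simp [P, E, cancel, inv, fromCols_mul_fromRows, fromRows_mul]

end Morphisms

end GrFraction

end FractionArithmetic

section FractionClasses

variable {Γ : Type u} [Group Γ] {R : Type v} [Ring R] {𝒜 : Γ → AddSubgroup R} {I : Set (SqMat R)}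
variable {γ δ ε : Γ} {ι κ ι' κ' : Type*}

variable [IsMulGraded 𝒜] [hI : Fact (IsGrPrimeMatrixIdeal 𝒜 I)]

variable (𝒜 I γ) in
/-- Fractions of degree `γ` up to equality of values. Denominators are indexed by `Fin n` here only
to keep the universe level down; `FractionClass.mk` accepts any finite index type. -/
def FractionClass : Type (max u v) :=
  Quotient (α := Σ n, GrFraction 𝒜 I γ (Fin n))
    { r p q := p.2.ValueEq q.2
      iseqv := ⟨fun p => .refl p.2, GrFraction.ValueEq.symm, GrFraction.ValueEq.trans⟩ }

namespace GrFraction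

/-- The fraction `u` with its indices relabelled along `e`. -/
def reindex (u : GrFraction 𝒜 I γ ι) (e : ι ≃ κ) : GrFraction 𝒜 I γ κ where
  den := u.den.submatrix e.symm e.symm
  row := u.row.submatrix id e.symm
  col := u.col.submatrix e.symm id
  rowDeg := u.rowDeg ∘ e.symm
  colDeg := u.colDeg ∘ e.symm
  den_hom := u.den_hom.submatrix _ _
  row_hom := u.row_hom.submatrix _ _
  col_hom := u.col_hom.submatrix _ _
  den_notMem h := u.den_notMem ((matMem_submatrix_iff _ _).1 h)

lemma reindex_valueEq [Finite ι] [Finite κ] (u : GrFraction 𝒜 I γ ι) (e : ι ≃ κ) :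
    (u.reindex e).ValueEq u := by
  cases nonempty_fintype ι
  cases nonempty_fintype κ
  exact (intertwines_of_equiv e.symm rfl rfl rfl rfl rfl).valueEq

end GrFraction

namespace FractionClass

variable [Finite ι] [Finite κ] [Finite ι'] [Finite κ']

/-- The class of a fraction. -/
noncomputable def mk (u : GrFraction 𝒜 I γ ι) : FractionClass 𝒜 I γ :=
  Quotient.mk _ ⟨Nat.card ι, u.reindex (Finite.equivFin ι)⟩

lemma mk_eq_mk {u : GrFraction 𝒜 I γ ι} {v : GrFraction 𝒜 I γ κ} : mk u = mk v ↔ u.ValueEq v :=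
  ⟨fun h => ((u.reindex_valueEq _).symm.trans (Quotient.exact h)).trans (v.reindex_valueEq _),
    fun h => Quotient.sound (((u.reindex_valueEq _).trans h).trans (v.reindex_valueEq _).symm)⟩

lemma exists_mk_eq (x : FractionClass 𝒜 I γ) :
    ∃ (n : ℕ) (u : GrFraction 𝒜 I γ (Fin n)), mk u = x := by
  obtain ⟨⟨n, u⟩, rfl⟩ := Quotient.exists_rep x
  exact ⟨n, u, Quotient.sound (u.reindex_valueEq _)⟩

noncomputable instance : Zero (FractionClass 𝒜 I γ) where
  zero := mk (0 : GrFraction 𝒜 I γ Empty)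

noncomputable instance : Neg (FractionClass 𝒜 I γ) where
  neg := Quotient.lift (fun p => mk (-p.2)) fun _ _ h => mk_eq_mk.2 h.neg

noncomputable instance : Add (FractionClass 𝒜 I γ) where
  add := Quotient.lift₂ (fun p q => mk (p.2 + q.2)) fun _ _ _ _ h h' => mk_eq_mk.2 (h.add h')

lemma mk_neg (u : GrFraction 𝒜 I γ ι) : mk (-u) = -mk u :=
  mk_eq_mk.2 (u.reindex_valueEq _).neg.symm

lemma mk_add (u : GrFraction 𝒜 I γ ι) (v : GrFraction 𝒜 I γ κ) : mk (u + v) = mk u + mk v :=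
  mk_eq_mk.2 ((u.reindex_valueEq _).add (v.reindex_valueEq _)).symm

lemma mk_eq_zero_iff {u : GrFraction 𝒜 I γ ι} : mk u = 0 ↔ u.IsNull :=
  mk_eq_mk.trans (GrFraction.isNull_add_iff (GrFraction.isNull_neg GrFraction.isNull_zero))

lemma mk_eq_of_intertwines [Fintype ι] [Fintype κ] {u : GrFraction 𝒜 I γ ι}
    {v : GrFraction 𝒜 I γ κ} (h : u.Intertwines v) : mk u = mk v :=
  mk_eq_mk.2 h.valueEq

noncomputable instance : AddCommGroup (FractionClass 𝒜 I γ) :=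
  have add_comm (x y : FractionClass 𝒜 I γ) : x + y = y + x := by
    obtain ⟨m, u, rfl⟩ := exists_mk_eq x
    obtain ⟨n, v, rfl⟩ := exists_mk_eq y
    simp only [← mk_add, mk_eq_of_intertwines (u.intertwines_add_comm v)]
  have add_zero (x : FractionClass 𝒜 I γ) : x + 0 = x := by
    obtain ⟨m, u, rfl⟩ := exists_mk_eq x
    exact (mk_add _ _).symm.trans (mk_eq_of_intertwines u.intertwines_add_zero)
  have add_neg (x : FractionClass 𝒜 I γ) : x + -x = 0 := by
    obtain ⟨m, u, rfl⟩ := exists_mk_eq x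
    rw [← mk_neg, ← mk_add, mk_eq_zero_iff]
    exact GrFraction.ValueEq.refl u
  { add_assoc x y z := by
      obtain ⟨m, u, rfl⟩ := exists_mk_eq x
      obtain ⟨n, v, rfl⟩ := exists_mk_eq y
      obtain ⟨k, w, rfl⟩ := exists_mk_eq z
      simp only [← mk_add, mk_eq_of_intertwines (u.intertwines_add_assoc v w)]
    zero_add x := (add_comm 0 x).trans (add_zero x)
    add_zero := add_zero
    add_comm := add_comm
    neg_add_cancel x := (add_comm (-x) x).trans (add_neg x)
    nsmul := nsmulRec
    zsmul := zsmulRec }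

section Multiplication

open GrFraction

variable {u : GrFraction 𝒜 I γ ι} {u' : GrFraction 𝒜 I γ ι'} {v : GrFraction 𝒜 I δ κ}
  {v' : GrFraction 𝒜 I δ κ'}

variable (v) in
lemma mk_mul_add_mk_neg_mul (h : u.ValueEq u') : mk (u * v) + mk (-u' * v) = 0 := by
  cases nonempty_fintype ι
  cases nonempty_fintype ι'
  cases nonempty_fintype κ
  rw [← mk_add, ← mk_eq_of_intertwines (intertwines_add_mul u (-u') v), mk_eq_zero_iff]
  exact isNull_mul_iff.2 (.inl h)

variable (u) in
lemma mk_mul_add_mk_mul_neg (h : v.ValueEq v') : mk (u * v) + mk (u * -v') = 0 := by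
  cases nonempty_fintype ι
  cases nonempty_fintype κ
  cases nonempty_fintype κ'
  rw [← mk_add, mk_eq_of_intertwines (intertwines_mul_add u v (-v')), mk_eq_zero_iff]
  exact isNull_mul_iff.2 (.inr h)

lemma mk_mul_congr (hu : u.ValueEq u') (hv : v.ValueEq v') : mk (u * v) = mk (u' * v') :=
  have hright : mk (u * v) = mk (u' * v) := add_right_cancel
    ((mk_mul_add_mk_neg_mul v hu).trans (mk_mul_add_mk_neg_mul v (.refl u')).symm)
  have hleft : mk (u' * v) = mk (u' * v') := add_right_cancel
    ((mk_mul_add_mk_mul_neg u' hv).trans (mk_mul_add_mk_mul_neg u' (.refl v')).symm)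
  hright.trans hleft

noncomputable instance :
    HMul (FractionClass 𝒜 I γ) (FractionClass 𝒜 I δ) (FractionClass 𝒜 I (γ * δ)) where
  hMul := Quotient.lift₂ (fun p q => mk (p.2 * q.2)) fun _ _ _ _ h h' => mk_mul_congr h h'

lemma mk_mul (u : GrFraction 𝒜 I γ ι) (v : GrFraction 𝒜 I δ κ) : mk (u * v) = mk u * mk v :=
  mk_mul_congr (u.reindex_valueEq _).symm (v.reindex_valueEq _).symm

end Multiplication

lemma gradedMk_eq_of_intertwines [Fintype ι] [Fintype κ] {u : GrFraction 𝒜 I γ ι}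
    {v : GrFraction 𝒜 I δ κ} (hdeg : γ = δ) (h : u.Intertwines v) :
    (GradedMonoid.mk (A := fun γ : Additive Γ => FractionClass 𝒜 I γ.toMul) (.ofMul γ) (mk u)) =
      .mk (.ofMul δ) (mk v) := by
  subst hdeg
  rw [mk_eq_of_intertwines h]

noncomputable instance : One (FractionClass 𝒜 I 1) where
  one := mk (1 : GrFraction 𝒜 I 1 Unit)

noncomputable instance :
    GradedMonoid.GOne fun γ : Additive Γ => FractionClass 𝒜 I γ.toMul where
  one := (1 : FractionClass 𝒜 I 1)

noncomputable instance :
    GradedMonoid.GMul fun γ : Additive Γ => FractionClass 𝒜 I γ.toMul where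
  mul x y := x * y

noncomputable instance :
    GradedMonoid.GMonoid fun γ : Additive Γ => FractionClass 𝒜 I γ.toMul where
  one_mul := by
    rintro ⟨γ, x⟩
    obtain ⟨m, u, rfl⟩ := exists_mk_eq x
    have key := (gradedMk_eq_of_intertwines (one_mul _).symm u.intertwines_one_mul).symm
    rw [mk_mul] at key
    exact key
  mul_one := by
    rintro ⟨γ, x⟩
    obtain ⟨m, u, rfl⟩ := exists_mk_eq x
    have key := gradedMk_eq_of_intertwines (mul_one _) u.intertwines_mul_one
    rw [mk_mul] at key
    exact key
  mul_assoc := by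
    rintro ⟨γ, x⟩ ⟨δ, y⟩ ⟨ε, z⟩
    obtain ⟨m, u, rfl⟩ := exists_mk_eq x
    obtain ⟨n, v, rfl⟩ := exists_mk_eq y
    obtain ⟨k, w, rfl⟩ := exists_mk_eq z
    have key := gradedMk_eq_of_intertwines (mul_assoc _ _ _) (u.intertwines_mul_assoc v w)
    simp only [mk_mul] at key
    exact key

noncomputable instance : DirectSum.GRing fun γ : Additive Γ => FractionClass 𝒜 I γ.toMul where
  mul_zero {γ δ} x := by
    obtain ⟨m, u, rfl⟩ := exists_mk_eq x
    exact (mk_mul _ _).symm.trans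
      (mk_eq_zero_iff.2 (GrFraction.isNull_mul_iff.2 (.inr GrFraction.isNull_zero)))
  zero_mul {γ δ} x := by
    obtain ⟨m, u, rfl⟩ := exists_mk_eq x
    exact (mk_mul _ _).symm.trans
      (mk_eq_zero_iff.2 (GrFraction.isNull_mul_iff.2 (.inl GrFraction.isNull_zero)))
  mul_add {γ δ} x y z := by
    obtain ⟨m, u, rfl⟩ := exists_mk_eq x
    obtain ⟨n, v, rfl⟩ := exists_mk_eq y
    obtain ⟨k, w, rfl⟩ := exists_mk_eq z
    change mk u * (mk v + mk w) = mk u * mk v + mk u * mk w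
    simp only [← mk_add, ← mk_mul, mk_eq_of_intertwines (u.intertwines_mul_add v w)]
  add_mul {γ δ} x y z := by
    obtain ⟨m, u, rfl⟩ := exists_mk_eq x
    obtain ⟨n, v, rfl⟩ := exists_mk_eq y
    obtain ⟨k, w, rfl⟩ := exists_mk_eq z
    change (mk u + mk v) * mk w = mk u * mk w + mk v * mk w
    simp only [← mk_add, ← mk_mul, mk_eq_of_intertwines (u.intertwines_add_mul v w)]
  natCast n := n • (1 : FractionClass 𝒜 I 1)
  natCast_zero := zero_nsmul _
  natCast_succ n := succ_nsmul _ n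
  intCast n := n • (1 : FractionClass 𝒜 I 1)
  intCast_ofNat n := natCast_zsmul (1 : FractionClass 𝒜 I 1) n
  intCast_negSucc_ofNat n := negSucc_zsmul (1 : FractionClass 𝒜 I 1) n

end FractionClass

end FractionClasses

/-! ### The graded division ring of fractions -/

section InternalGrading

variable {Γ : Type*} [Group Γ] [DecidableEq Γ] {R : Type*} [Ring R] {𝒜 : Γ → AddSubgroup R}
  [IsMulGraded 𝒜]

/-- A `Γ`-graded ring as a graded ring over the additive copy of `Γ`. -/
noncomputable abbrev IsMulGraded.gradedRing (h : DirectSum.IsInternal 𝒜) :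
    GradedRing fun γ : Additive Γ => 𝒜 γ.toMul where
  __ := DirectSum.IsInternal.chooseDecomposition (fun γ : Additive Γ => 𝒜 γ.toMul) h
  one_mem := IsMulGraded.one_mem
  mul_mem _ _ _ _ := IsMulGraded.mul_mem

lemma IsMulGraded.exists_ringHom {S : Type*} [Semiring S] (h : DirectSum.IsInternal 𝒜)
    (f : ∀ γ, 𝒜 γ →+ S) (hone : f 1 ⟨1, one_mem⟩ = 1)
    (hmul : ∀ {γ δ} (a : 𝒜 γ) (b : 𝒜 δ), f (γ * δ) ⟨a * b, mul_mem a.2 b.2⟩ = f γ a * f δ b) :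
    ∃ φ : R →+* S, ∀ γ (a : 𝒜 γ), φ a = f γ a := by
  let ℬ (γ : Additive Γ) := 𝒜 γ.toMul
  let _ : GradedRing ℬ := gradedRing h
  refine ⟨(DirectSum.toSemiring (fun γ : Additive Γ => f γ.toMul) hone hmul).comp
    (DirectSum.decomposeRingEquiv ℬ : R →+* _), fun γ a => ?_⟩
  have ha : DirectSum.decompose ℬ (a : R) = DirectSum.of (fun i => ℬ i) (.ofMul γ) a :=
    DirectSum.decompose_coe ℬ (i := .ofMul γ) a
  exact (congrArg _ ha).trans (DirectSum.toSemiring_of _ hone hmul _ _)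

lemma IsMulGraded.exists_mem_mul_eq_one (h : DirectSum.IsInternal 𝒜) {γ : Γ} {x : R}
    (hx : x ∈ 𝒜 γ) (hu : IsUnit x) : ∃ y ∈ 𝒜 γ⁻¹, x * y = 1 := by
  let ℬ (γ : Additive Γ) := 𝒜 γ.toMul
  let _ : GradedRing ℬ := gradedRing h
  obtain ⟨y, hxy⟩ := hu.exists_right_inv
  refine ⟨DirectSum.decompose ℬ y (-.ofMul γ), SetLike.coe_mem _, ?_⟩
  rw [← DirectSum.coe_decompose_mul_add_of_left_mem ℬ (i := .ofMul γ) hx, hxy, add_neg_cancel]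
  exact DirectSum.decompose_of_mem_same ℬ (one_mem (𝒜 := 𝒜))

end InternalGrading

/-- `𝒦` makes `K` a `Γ`-graded division ring, up to the direct sum decomposition. Inverses are
required to be homogeneous, which in the presence of that decomposition is automatic. -/
class IsGrDivisionRing {Γ K : Type*} [Group Γ] [Ring K] (𝒦 : Γ → AddSubgroup K) : Prop
    extends IsMulGraded 𝒦 where
  zero_ne_one : (0 : K) ≠ 1
  exists_mul_eq_one : ∀ {γ : Γ} {x : K}, x ∈ 𝒦 γ → x ≠ 0 → ∃ y ∈ 𝒦 γ⁻¹, x * y = 1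

lemma IsGrDivisionRing.isUnit {Γ K : Type*} [Group Γ] [Ring K] {𝒦 : Γ → AddSubgroup K}
    [IsGrDivisionRing 𝒦] {γ : Γ} {x : K} (hx : x ∈ 𝒦 γ) (hne : x ≠ 0) : IsUnit x := by
  obtain ⟨y, hy, hxy⟩ := exists_mul_eq_one hx hne
  have hy0 : y ≠ 0 := right_ne_zero_of_mul (hxy.trans_ne (zero_ne_one 𝒦).symm)
  obtain ⟨z, -, hyz⟩ := exists_mul_eq_one hy hy0
  exact ⟨⟨x, y, hxy, by rwa [left_inv_eq_right_inv hxy hyz]⟩, rfl⟩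

section FractionRing

variable {Γ : Type u} [Group Γ] {R : Type v} [Ring R] {𝒜 : Γ → AddSubgroup R} {I : Set (SqMat R)}
variable {γ δ ε : Γ} {ι κ ι' κ' : Type*}

variable [IsMulGraded 𝒜] [hI : Fact (IsGrPrimeMatrixIdeal 𝒜 I)] [DecidableEq Γ]

variable (𝒜 I) in
/-- The `Γ`-graded ring of all finite sums of homogeneous fractions. It is a graded division ring
over which precisely the matrices in the gr-prime matrix ideal `I` become singular. -/
abbrev GrFractionRing : Type (max u v) :=
  DirectSum (Additive Γ) fun γ => FractionClass 𝒜 I γ.toMul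

namespace GrFraction

/-- The homogeneous element of the graded ring of fractions represented by a fraction. -/
noncomputable def value [Finite ι] (u : GrFraction 𝒜 I γ ι) : GrFractionRing 𝒜 I :=
  DirectSum.of (fun γ : Additive Γ => FractionClass 𝒜 I γ.toMul) (.ofMul γ) (.mk u)

section Value

variable [Finite ι] [Finite κ]

lemma value_add (u : GrFraction 𝒜 I γ ι) (v : GrFraction 𝒜 I γ κ) :
    (u + v).value = u.value + v.value := by
  rw [value, FractionClass.mk_add]
  exact map_add _ _ _

lemma value_mul (u : GrFraction 𝒜 I γ ι) (v : GrFraction 𝒜 I δ κ) :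
    (u * v).value = u.value * v.value := by
  rw [value, FractionClass.mk_mul]
  exact (DirectSum.of_mul_of (A := fun γ : Additive Γ => FractionClass 𝒜 I γ.toMul) _ _).symm

lemma value_neg (u : GrFraction 𝒜 I γ ι) : (-u).value = -u.value := by
  rw [value, FractionClass.mk_neg]
  exact map_neg _ _

lemma value_one : (1 : GrFraction 𝒜 I 1 Unit).value = 1 :=
  rfl

lemma value_eq_zero_iff {u : GrFraction 𝒜 I γ ι} : u.value = 0 ↔ u.IsNull := by
  rw [← FractionClass.mk_eq_zero_iff]
  exact map_eq_zero_iff _ (DirectSum.of_injective _)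

lemma Intertwines.value_eq [Fintype ι] [Fintype κ] {u : GrFraction 𝒜 I γ ι}
    {v : GrFraction 𝒜 I δ κ} (h : u.Intertwines v) (hdeg : γ = δ) : u.value = v.value :=
  DirectSum.of_eq_of_gradedMonoid_eq (FractionClass.gradedMk_eq_of_intertwines hdeg h)

lemma value_inv_mul_value {u : GrFraction 𝒜 I γ ι} (hu : ¬ u.IsNull) :
    (u.inv hu).value * u.value = 1 := by
  cases nonempty_fintype ι
  rw [← value_mul, (u.inv_mul_intertwines_cancel hu).value_eq (inv_mul_cancel γ),
    ← (u.one_intertwines_cancel hu).value_eq rfl, value_one]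

lemma value_mul_value_inv (u : GrFraction 𝒜 I γ ι) (hu : ¬ u.IsNull) :
    u.value * (u.inv hu).value = 1 := by
  have hinv : ¬ (u.inv hu).IsNull := fun h => by
    have hone := value_inv_mul_value hu
    rw [value_eq_zero_iff.2 h, zero_mul, ← value_one, eq_comm, value_eq_zero_iff] at hone
    exact not_isNull_one hone
  have hmul := value_inv_mul_value hinv
  rwa [left_inv_eq_right_inv hmul (value_inv_mul_value hu)] at hmul

lemma value_ofMem_add {r s : R} (hr : r ∈ 𝒜 γ) (hs : s ∈ 𝒜 γ) :
    (ofMem I (add_mem hr hs)).value = (ofMem I hr).value + (ofMem I hs).value := by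
  have hsum : ofMem I (add_mem hr hs) = (ofMem I hr).withRow ((ofMem I hr).row + (ofMem I hs).row)
      ((ofMem I hr).row_hom.add (ofMem I hs).row_hom) := by
    simp [ofMem, withRow, diagonal_add]
  rw [hsum, ((ofMem I hr).intertwines_withRow_add _ (ofMem I hs).row_hom).value_eq rfl, value_add]
  rfl

lemma value_ofMem_mul {r s : R} (hr : r ∈ 𝒜 γ) (hs : s ∈ 𝒜 δ) :
    (ofMem I (IsMulGraded.mul_mem hr hs)).value = (ofMem I hr).value * (ofMem I hs).value := by
  rw [← value_mul, ← ((ofMem I hs).withRow_intertwines_ofMem_mul hr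
    (ofMem I (IsMulGraded.mul_mem hr hs)).row_hom ?_).value_eq rfl]
  · rfl
  · ext
    simp [ofMem]

end Value

end GrFraction

namespace GrFractionRing

variable (𝒜 I) in
/-- The homogeneous component of degree `γ`. -/
noncomputable def component (γ : Γ) : AddSubgroup (GrFractionRing 𝒜 I) :=
  (DirectSum.of (fun γ : Additive Γ => FractionClass 𝒜 I γ.toMul) (.ofMul γ)).range

lemma value_mem_component [Finite ι] (u : GrFraction 𝒜 I γ ι) : u.value ∈ component 𝒜 I γ :=
  ⟨_, rfl⟩

lemma exists_value_eq {x : GrFractionRing 𝒜 I} (hx : x ∈ component 𝒜 I γ) :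
    ∃ (n : ℕ) (u : GrFraction 𝒜 I γ (Fin n)), u.value = x := by
  obtain ⟨c, rfl⟩ := hx
  obtain ⟨n, u, rfl⟩ := c.exists_mk_eq
  exact ⟨n, u, rfl⟩

instance : IsMulGraded (component 𝒜 I) where
  one_mem := value_mem_component (1 : GrFraction 𝒜 I 1 Unit)
  mul_mem hx hy := by
    obtain ⟨m, u, rfl⟩ := exists_value_eq hx
    obtain ⟨n, v, rfl⟩ := exists_value_eq hy
    exact u.value_mul v ▸ value_mem_component (u * v)

lemma isInternal_component : DirectSum.IsInternal (component 𝒜 I) := by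
  let decompose : GrFractionRing 𝒜 I →+ DirectSum Γ fun γ => component 𝒜 I γ :=
    DirectSum.toAddMonoid fun γ => (DirectSum.of (fun γ => component 𝒜 I γ) γ.toMul).comp
      (DirectSum.of (fun γ : Additive Γ => FractionClass 𝒜 I γ.toMul) γ).rangeRestrict
  let _ := DirectSum.Decomposition.ofAddHom (ℳ := component 𝒜 I) decompose
    (by
      ext γ x : 2
      simp only [decompose, AddMonoidHom.coe_comp, Function.comp_apply, AddMonoidHom.id_comp,
        DirectSum.toAddMonoid_of]
      exact DirectSum.coeAddMonoidHom_of _ _ _)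
    (by
      ext γ ⟨_, x, rfl⟩ : 2
      simp [decompose]
      rfl)
  exact DirectSum.Decomposition.isInternal _

instance : IsGrDivisionRing (component 𝒜 I) where
  zero_ne_one h := GrFraction.not_isNull_one (GrFraction.value_eq_zero_iff.1 h.symm)
  exists_mul_eq_one hx hne := by
    obtain ⟨n, u, rfl⟩ := exists_value_eq hx
    have hu := mt GrFraction.value_eq_zero_iff.2 hne
    exact ⟨_, value_mem_component (u.inv hu), u.value_mul_value_inv hu⟩

variable (𝒜 I) in
lemma exists_ringHom_eq_value (h : DirectSum.IsInternal 𝒜) :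
    ∃ φ : R →+* GrFractionRing 𝒜 I, ∀ {γ : Γ} {r : R} (hr : r ∈ 𝒜 γ),
      φ r = (GrFraction.ofMem I hr).value := by
  let f (γ : Γ) : 𝒜 γ →+ GrFractionRing 𝒜 I := AddMonoidHom.mk'
    (fun a => (GrFraction.ofMem I a.2).value) fun a b => GrFraction.value_ofMem_add a.2 b.2
  obtain ⟨φ, hφ⟩ := IsMulGraded.exists_ringHom h f rfl fun a b =>
    GrFraction.value_ofMem_mul a.2 b.2
  exact ⟨φ, fun hr => hφ _ ⟨_, hr⟩⟩

end GrFractionRing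

end FractionRing

/-! ### Matrices over graded division rings -/

section GradedLinearAlgebra

open MulOpposite

variable {Γ : Type u} [Group Γ] {K : Type w} [Ring K] {𝒦 : Γ → AddSubgroup K}
variable {ι κ τ ι' κ' : Type*} {γ δ : Γ}

variable (𝒦) in
/-- The group of homogeneous columns of distribution `(β, γ⁻¹)`, written as vectors. -/
def homogVec (β : κ → Γ) (γ : Γ) : AddSubgroup (κ → K) :=
  AddSubgroup.pi Set.univ fun j => 𝒦 (β j * γ)

lemma mem_homogVec {β : κ → Γ} {x : κ → K} :
    x ∈ homogVec 𝒦 β γ ↔ ∀ j, x j ∈ 𝒦 (β j * γ) := by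
  simp [homogVec, AddSubgroup.mem_pi]

variable (𝒦) in
/-- `A` annihilates a nonzero homogeneous vector; here `β` are the column degrees of `A`. -/
def HasHomogKernel [Fintype κ] (A : Matrix ι κ K) (β : κ → Γ) : Prop :=
  ∃ γ, ∃ x ∈ homogVec 𝒦 β γ, x ≠ 0 ∧ A *ᵥ x = 0

lemma HasHomogKernel.of_submatrix [Fintype κ] [Fintype κ'] {A : Matrix ι κ K} {β : κ → Γ}
    {e : ι' ≃ ι} {f : κ' ≃ κ} (h : HasHomogKernel 𝒦 (A.submatrix e f) (β ∘ f)) :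
    HasHomogKernel 𝒦 A β := by
  obtain ⟨γ, x, hx, hne, hzero⟩ := h
  refine ⟨γ, x ∘ f.symm, mem_homogVec.2 fun j => ?_, fun h => hne ?_, ?_⟩
  · simpa using mem_homogVec.1 hx (f.symm j)
  · exact f.symm.surjective.injective_comp_right h
  · rw [submatrix_mulVec_equiv] at hzero
    exact e.surjective.injective_comp_right hzero

lemma hasHomogKernel_fromBlocks_iff [Fintype κ] [Fintype κ'] {A : Matrix ι κ K}
    {D : Matrix ι' κ' K} {β : κ → Γ} {β' : κ' → Γ} :
    HasHomogKernel 𝒦 (fromBlocks A 0 0 D) (Sum.elim β β') ↔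
      HasHomogKernel 𝒦 A β ∨ HasHomogKernel 𝒦 D β' := by
  constructor
  · rintro ⟨γ, x, hx, hne, hzero⟩
    rw [mem_homogVec, Sum.forall] at hx
    rw [fromBlocks_mulVec, zero_mulVec, zero_mulVec, add_zero, zero_add, ← Sum.elim_zero_zero,
      Sum.elim_eq_iff] at hzero
    rcases eq_or_ne (x ∘ Sum.inl) 0 with hl | hl
    · refine .inr ⟨γ, x ∘ Sum.inr, mem_homogVec.2 hx.2, fun hr => hne ?_, hzero.2⟩
      rw [← Sum.elim_comp_inl_inr x, hl, hr, Sum.elim_zero_zero]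
    · exact .inl ⟨γ, x ∘ Sum.inl, mem_homogVec.2 hx.1, hl, hzero.1⟩
  · rintro (⟨γ, x, hx, hne, hzero⟩ | ⟨γ, x, hx, hne, hzero⟩)
    · refine ⟨γ, Sum.elim x 0, mem_homogVec.2 (Sum.forall.2 ⟨mem_homogVec.1 hx, fun _ =>
        zero_mem _⟩), fun h => hne (congrArg (· ∘ Sum.inl) h), ?_⟩
      simp [fromBlocks_mulVec, hzero]
    · refine ⟨γ, Sum.elim 0 x, mem_homogVec.2 (Sum.forall.2 ⟨fun _ => zero_mem _,
        mem_homogVec.1 hx⟩), fun h => hne (congrArg (· ∘ Sum.inr) h), ?_⟩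
      simp [fromBlocks_mulVec, hzero]

lemma not_hasHomogKernel_of_isUnit [Fintype ι] [DecidableEq ι] {A : Matrix ι ι K} {β : ι → Γ}
    (hA : IsUnit A) : ¬ HasHomogKernel 𝒦 A β := by
  rintro ⟨γ, x, -, hne, hzero⟩
  obtain ⟨B, hBA⟩ := hA.exists_left_inv
  exact hne (by rw [← one_mulVec x, ← hBA, ← mulVec_mulVec, hzero, mulVec_zero])

section ColSum

variable {A B C : Matrix ι κ K}

lemma IsColSum.symm {c : κ} (h : IsColSum A B C c) : IsColSum B A C c :=
  ⟨fun i j hj => ⟨(h.1 i j hj).1.symm, (h.1 i j hj).2.trans (h.1 i j hj).1⟩,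
    fun i => (h.2 i).trans (add_comm _ _)⟩

lemma IsColSum.eq_add_vecMulVec [DecidableEq κ] {c : κ} (h : IsColSum A B C c) :
    C = A + vecMulVec (B.col c) (Pi.single c 1) := by
  ext i j
  rcases eq_or_ne j c with rfl | hj
  · simp [vecMulVec_apply, h.2]
  · simp [vecMulVec_apply, hj, (h.1 i j hj).2]

lemma IsColSum.eq_add_vecMulVec_of_transpose [DecidableEq ι] {r : ι}
    (h : IsColSum Aᵀ Bᵀ Cᵀ r) : C = A + vecMulVec (Pi.single r 1) (B.row r) := by
  ext i j
  rcases eq_or_ne i r with rfl | hi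
  · simpa [vecMulVec_apply] using h.2 j
  · simpa [vecMulVec_apply, hi] using (h.1 j i hi).2

end ColSum

section MulGraded

variable [IsMulGraded 𝒦] {α : ι → Γ} {β : κ → Γ} {A : Matrix ι κ K} {x : κ → K}

lemma HasDistribution.mulVec_mem_homogVec [Fintype κ] (hA : HasDistribution 𝒦 A α β)
    (hx : x ∈ homogVec 𝒦 β γ) : A *ᵥ x ∈ homogVec 𝒦 α γ := by
  refine mem_homogVec.2 fun i => sum_mem fun j _ => ?_
  simpa [mul_assoc] using IsMulGraded.mul_mem (hA i j) (mem_homogVec.1 hx j)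

lemma op_smul_mem_homogVec {s : K} (hx : x ∈ homogVec 𝒦 β γ) (hs : s ∈ 𝒦 δ) :
    op s • x ∈ homogVec 𝒦 β (γ * δ) :=
  mem_homogVec.2 fun j => by
    simpa [mul_assoc] using IsMulGraded.mul_mem (mem_homogVec.1 hx j) hs

lemma HasHomogKernel.fromBlocks_of_schur [Fintype ι] [DecidableEq ι] [Fintype κ] [Fintype κ']
    {B : Matrix ι κ' K} {C : Matrix ι' κ K} {D : Matrix ι' κ' K} {E : Matrix κ ι K} {β' : κ' → Γ}
    (hB : HasDistribution 𝒦 B α β') (hE : HasDistribution 𝒦 E β α) (hAE : A * E = 1)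
    (h : HasHomogKernel 𝒦 (D - C * E * B) β') :
    HasHomogKernel 𝒦 (fromBlocks A B C D) (Sum.elim β β') := by
  obtain ⟨γ, x, hx, hne, hzero⟩ := h
  have hpivot := (hE.mul hB).mulVec_mem_homogVec hx
  refine ⟨γ, Sum.elim (-((E * B) *ᵥ x)) x, mem_homogVec.2 (Sum.forall.2
    ⟨mem_homogVec.1 (neg_mem hpivot), mem_homogVec.1 hx⟩),
    fun h => hne (congrArg (· ∘ Sum.inr) h), ?_⟩
  rw [sub_mulVec, Matrix.mul_assoc] at hzero
  rw [fromBlocks_mulVec, Sum.elim_comp_inl, Sum.elim_comp_inr, mulVec_neg, mulVec_mulVec,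
    mulVec_neg, mulVec_mulVec, ← Matrix.mul_assoc A, hAE, Matrix.one_mul, neg_add_cancel,
    neg_add_eq_sub, hzero, Sum.elim_zero_zero]

lemma single_one_mem_homogVec [DecidableEq κ] (β : κ → Γ) (c : κ) :
    Pi.single c 1 ∈ homogVec 𝒦 β (β c)⁻¹ :=
  mem_homogVec.2 fun j => by
    simpa [one_apply, Pi.single_apply] using HasDistribution.one (𝒜 := 𝒦) (α := β) j c

end MulGraded

section DivisionRing

variable [IsGrDivisionRing 𝒦] {α : ι → Γ} {β : κ → Γ} {A : Matrix ι κ K} {x : κ → K}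

lemma IsGrDivisionRing.exists_op_smul_mem_homogVec {c : κ} (hx : x ∈ homogVec 𝒦 β γ)
    (hc : x c ≠ 0) : ∃ s, op s • x ∈ homogVec 𝒦 β (β c)⁻¹ ∧ x c * s = 1 := by
  obtain ⟨s, hs, hxs⟩ := exists_mul_eq_one (mem_homogVec.1 hx c) hc
  exact ⟨s, by simpa using op_smul_mem_homogVec hx hs, hxs⟩

lemma HasDistribution.hasHomogKernel_of_pivot [DecidableEq κ] [Fintype κ]
    (hA : HasDistribution 𝒦 A α β) {r : ι} {c : κ} (hrc : A r c ≠ 0)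
    (h : ∀ D : Matrix {i // i ≠ r} {j // j ≠ c} K,
      HasDistribution 𝒦 D (fun i => α i) (fun j => β j) → HasHomogKernel 𝒦 D fun j => β j) :
    HasHomogKernel 𝒦 A β := by
  classical
  obtain ⟨y, hy, hcy⟩ := IsGrDivisionRing.exists_mul_eq_one (hA r c) hrc
  let e := Equiv.sumCompl (· = r)
  let f := Equiv.sumCompl (· = c)
  let A' := A.submatrix e f
  have hA' : HasDistribution 𝒦 A' (α ∘ e) (β ∘ f) := hA.submatrix e f
  let E : Matrix {j // j = c} {i // i = r} K := of fun _ _ => y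
  have hE : HasDistribution 𝒦 E (fun j => β j) (fun i => α i) := by
    rintro ⟨_, rfl⟩ ⟨_, rfl⟩
    simpa [E] using hy
  have hmul : A'.toBlocks₁₁ * E = 1 := by
    ext ⟨_, rfl⟩ ⟨_, rfl⟩
    rw [mul_apply, Fintype.sum_unique]
    exact hcy.trans (one_apply_eq _).symm
  have hB : HasDistribution 𝒦 A'.toBlocks₁₂ (fun i => α i) (fun j => β j) :=
    fun i j => hA' (.inl i) (.inr j)
  have hC : HasDistribution 𝒦 A'.toBlocks₂₁ (fun i => α i) (fun j => β j) :=
    fun i j => hA' (.inr i) (.inl j)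
  have hD : HasDistribution 𝒦 A'.toBlocks₂₂ (fun i => α i) (fun j => β j) :=
    fun i j => hA' (.inr i) (.inr j)
  have hblocks := HasHomogKernel.fromBlocks_of_schur hB hE hmul
    (h (A'.toBlocks₂₂ - A'.toBlocks₂₁ * E * A'.toBlocks₁₂) (hD.sub ((hC.mul hE).mul hB)))
  rw [fromBlocks_toBlocks] at hblocks
  change HasHomogKernel 𝒦 A' (Sum.elim ((β ∘ f) ∘ Sum.inl) ((β ∘ f) ∘ Sum.inr)) at hblocks
  rw [Sum.elim_comp_inl_inr] at hblocks
  exact hblocks.of_submatrix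

lemma HasDistribution.hasHomogKernel_of_card_lt [Fintype ι] [Fintype κ]
    (hA : HasDistribution 𝒦 A α β) (hcard : Fintype.card ι < Fintype.card κ) :
    HasHomogKernel 𝒦 A β := by
  classical
  induction hn : Fintype.card ι generalizing ι κ with
  | zero =>
    have := Fintype.card_eq_zero_iff.1 hn
    obtain ⟨c⟩ := Fintype.card_pos_iff.1 (hn ▸ hcard)
    exact ⟨(β c)⁻¹, Pi.single c 1, single_one_mem_homogVec β c,
      fun h => IsGrDivisionRing.zero_ne_one 𝒦 (by simpa using (congrFun h c).symm),
      Subsingleton.elim _ _⟩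
  | succ n ih =>
    obtain ⟨r⟩ : Nonempty ι := Fintype.card_pos_iff.1 (by omega)
    have hrow : Fintype.card {i // i ≠ r} = n := by
      rw [Fintype.card_subtype_compl, Fintype.card_subtype_eq, hn, Nat.add_sub_cancel]
    by_cases hzero : ∀ j, A r j = 0
    · obtain ⟨γ, x, hx, hne, hker⟩ :=
        ih (hA.submatrix Subtype.val id : HasDistribution 𝒦 (A.submatrix (Subtype.val :
          {i // i ≠ r} → ι) id) _ _) (by omega) hrow
      refine ⟨γ, x, hx, hne, funext fun i => ?_⟩
      rcases eq_or_ne i r with rfl | hi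
      · simp [mulVec, dotProduct, hzero]
      · exact congrFun hker ⟨i, hi⟩
    push Not at hzero
    obtain ⟨c, hc⟩ := hzero
    refine hA.hasHomogKernel_of_pivot hc fun D hD => ih hD ?_ hrow
    rw [hrow, Fintype.card_subtype_compl, Fintype.card_subtype_eq]
    omega

lemma HasDistribution.exists_mulVec_eq [Fintype ι] {A : Matrix ι ι K} {β : ι → Γ}
    (hA : HasDistribution 𝒦 A α β) (hker : ¬ HasHomogKernel 𝒦 A β) {b : ι → K}
    (hb : b ∈ homogVec 𝒦 α δ) : ∃ x ∈ homogVec 𝒦 β δ, A *ᵥ x = b := by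
  have hAb : HasDistribution 𝒦 (Matrix.fromCols A (replicateCol Unit b)) α
      (Sum.elim β fun _ => δ⁻¹) :=
    hA.fromCols fun i _ => by simpa using mem_homogVec.1 hb i
  obtain ⟨γ, z, hz, hne, hzero⟩ := hAb.hasHomogKernel_of_card_lt (by simp)
  have hsplit (w : ι ⊕ Unit → K) : Matrix.fromCols A (replicateCol Unit b) *ᵥ w =
      A *ᵥ (w ∘ Sum.inl) + op (w (.inr ())) • b := by
    rw [fromCols_mulVec]
    ext i
    simp [mulVec, dotProduct]
  have hlast : z (.inr ()) ≠ 0 := fun h => hker ⟨γ, z ∘ Sum.inl, mem_homogVec.2 fun j =>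
    mem_homogVec.1 hz (.inl j), fun hl => hne ?_, by simpa [hsplit, h] using hzero⟩
  · obtain ⟨s, hs, hzs⟩ := IsGrDivisionRing.exists_op_smul_mem_homogVec hz hlast
    refine ⟨-((op s • z) ∘ Sum.inl), neg_mem (mem_homogVec.2 fun j => ?_), ?_⟩
    · simpa using mem_homogVec.1 hs (.inl j)
    · have hscaled := (mulVec_smul (Matrix.fromCols A (replicateCol Unit b)) (op s) z).trans
        (by rw [hzero, smul_zero])
      rw [hsplit] at hscaled
      rw [mulVec_neg, neg_eq_iff_add_eq_zero]
      simpa [hzs] using hscaled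
  · ext (i | _)
    · exact congrFun hl i
    · exact h

lemma HasDistribution.exists_mul_eq_one [Fintype ι] [DecidableEq ι] {A : Matrix ι ι K} {β : ι → Γ}
    (hA : HasDistribution 𝒦 A α β) (hker : ¬ HasHomogKernel 𝒦 A β) :
    ∃ B, HasDistribution 𝒦 B β α ∧ A * B = 1 := by
  choose x hx hAx using fun i => hA.exists_mulVec_eq hker (single_one_mem_homogVec α i)
  refine ⟨of fun j i => x i j, fun j i => mem_homogVec.1 (hx i) j, ?_⟩
  ext j i
  exact (congrFun (hAx i) j).trans (by rw [Pi.single_apply, one_apply])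

lemma HasDistribution.isUnit_of_mul_eq_one [Fintype ι] [DecidableEq ι] {A B : Matrix ι ι K}
    {β : ι → Γ} (hB : HasDistribution 𝒦 B β α) (hAB : A * B = 1) : IsUnit A := by
  have hker : ¬ HasHomogKernel 𝒦 B α := by
    rintro ⟨γ, x, -, hne, hzero⟩
    exact hne (by rw [← one_mulVec x, ← hAB, ← mulVec_mulVec, hzero, mulVec_zero])
  obtain ⟨C, -, hBC⟩ := hB.exists_mul_eq_one hker
  exact ⟨⟨A, B, hAB, left_inv_eq_right_inv hAB hBC ▸ hBC⟩, rfl⟩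

lemma HasDistribution.isUnit_iff [Fintype ι] [DecidableEq ι] {A : Matrix ι ι K} {β : ι → Γ}
    (hA : HasDistribution 𝒦 A α β) : IsUnit A ↔ ¬ HasHomogKernel 𝒦 A β := by
  refine ⟨not_hasHomogKernel_of_isUnit, fun hker => ?_⟩
  obtain ⟨B, hB, hAB⟩ := hA.exists_mul_eq_one hker
  exact hB.isUnit_of_mul_eq_one hAB

lemma HasHomogKernel.of_isColSum [Fintype κ] {A B C : Matrix ι κ K} {c : κ}
    (h : IsColSum A B C c) (hA : HasHomogKernel 𝒦 A β) (hB : HasHomogKernel 𝒦 B β) :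
    HasHomogKernel 𝒦 C β := by
  classical
  obtain ⟨γ, x, hx, hxne, hAx⟩ := hA
  obtain ⟨δ, y, hy, hyne, hBy⟩ := hB
  have hCA (z : κ → K) : C *ᵥ z = A *ᵥ z + op (z c) • B.col c := by
    rw [h.eq_add_vecMulVec, add_mulVec, vecMulVec_mulVec, single_one_dotProduct]
  have hCB (z : κ → K) : C *ᵥ z = B *ᵥ z + op (z c) • A.col c := by
    rw [h.symm.eq_add_vecMulVec, add_mulVec, vecMulVec_mulVec, single_one_dotProduct]
  by_cases hxc : x c = 0
  · exact ⟨γ, x, hx, hxne, by simp [hCA, hAx, hxc]⟩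
  by_cases hyc : y c = 0
  · exact ⟨δ, y, hy, hyne, by simp [hCB, hBy, hyc]⟩
  obtain ⟨s, hs, hxs⟩ := IsGrDivisionRing.exists_op_smul_mem_homogVec hx hxc
  obtain ⟨t, ht, hyt⟩ := IsGrDivisionRing.exists_op_smul_mem_homogVec hy hyc
  refine ⟨(β c)⁻¹, op s • x + op t • y - Pi.single c 1,
    sub_mem (add_mem hs ht) (single_one_mem_homogVec β c), fun hzero => ?_, ?_⟩
  · exact IsGrDivisionRing.zero_ne_one 𝒦 (by simpa [hxs, hyt] using (congrFun hzero c).symm)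
  · have hCx : C *ᵥ (op s • x) = B.col c := by simp [hCA, mulVec_smul, hAx, hxs]
    have hCy : C *ᵥ (op t • y) = A.col c := by simp [hCB, mulVec_smul, hBy, hyt]
    rw [mulVec_sub, mulVec_add, hCx, hCy, mulVec_single_one, sub_eq_zero, add_comm]
    exact (funext h.2).symm

lemma HasHomogKernel.of_isColSum_transpose [Fintype κ] {A B C : Matrix ι κ K} {r : ι}
    (hAα : HasDistribution 𝒦 A α β) (hBα : HasDistribution 𝒦 B α β)
    (h : IsColSum Aᵀ Bᵀ Cᵀ r) (hA : HasHomogKernel 𝒦 A β) (hB : HasHomogKernel 𝒦 B β) :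
    HasHomogKernel 𝒦 C β := by
  classical
  obtain ⟨γ, x, hx, hxne, hAx⟩ := hA
  obtain ⟨δ, y, hy, hyne, hBy⟩ := hB
  have hCA (z : κ → K) : C *ᵥ z = A *ᵥ z + op ((B *ᵥ z) r) • (Pi.single r 1 : ι → K) := by
    rw [h.eq_add_vecMulVec_of_transpose, add_mulVec, vecMulVec_mulVec]
    rfl
  have hCB (z : κ → K) : C *ᵥ z = B *ᵥ z + op ((A *ᵥ z) r) • (Pi.single r 1 : ι → K) := by
    rw [h.symm.eq_add_vecMulVec_of_transpose, add_mulVec, vecMulVec_mulVec]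
    rfl
  by_contra hC
  have hs : (B *ᵥ x) r ≠ 0 := fun hs => hC ⟨γ, x, hx, hxne, by simp [hCA, hAx, hs]⟩
  have hsγ := mem_homogVec.1 (hBα.mulVec_mem_homogVec hx) r
  have htδ := mem_homogVec.1 (hAα.mulVec_mem_homogVec hy) r
  obtain ⟨s', hs', hss'⟩ := IsGrDivisionRing.exists_mul_eq_one hsγ hs
  let q := s' * (A *ᵥ y) r
  have hqx : op q • x ∈ homogVec 𝒦 β δ := by
    have hmem := op_smul_mem_homogVec hx (IsMulGraded.mul_mem hs' htδ)
    rwa [show γ * ((α r * γ)⁻¹ * (α r * δ)) = δ by group] at hmem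
  have hy_eq : op q • x = y := by
    by_contra hne
    refine hC ⟨δ, op q • x - y, sub_mem hqx hy, sub_ne_zero.2 hne, ?_⟩
    have hCx : C *ᵥ (op q • x) = op ((A *ᵥ y) r) • (Pi.single r 1 : ι → K) := by
      rw [mulVec_smul, hCA, hAx, zero_add, smul_smul, ← op_mul, ← mul_assoc, hss', one_mul]
    rw [mulVec_sub, hCx, hCB, hBy, zero_add, sub_self]
  have hAy : A *ᵥ y = 0 := by rw [← hy_eq, mulVec_smul, hAx, smul_zero]
  exact hC ⟨δ, y, hy, hyne, by simp [hCA, hAy, hBy]⟩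

lemma IsHomogDetSum.not_isUnit [Fintype ι] [DecidableEq ι] {A B C : Matrix ι ι K}
    (h : IsHomogDetSum 𝒦 A B C) (hA : ¬ IsUnit A) (hB : ¬ IsUnit B) : ¬ IsUnit C := by
  obtain ⟨⟨α, β, hAα, hBα⟩, hsum⟩ := h
  have hkerA := not_not.1 (mt hAα.isUnit_iff.2 hA)
  have hkerB := not_not.1 (mt hBα.isUnit_iff.2 hB)
  refine fun hC => not_hasHomogKernel_of_isUnit (𝒦 := 𝒦) (β := β) hC ?_
  obtain ⟨c, hc⟩ | ⟨r, hr⟩ := hsum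
  · exact .of_isColSum hc hkerA hkerB
  · exact .of_isColSum_transpose hAα hBα hr hkerA hkerB

lemma HasDistribution.not_isUnit_mul [Fintype ι] [DecidableEq ι] [Fintype τ] {lam : τ → Γ}
    {β : ι → Γ} (P : Matrix ι τ K) {Q : Matrix τ ι K} (hQ : HasDistribution 𝒦 Q lam β)
    (hcard : Fintype.card τ < Fintype.card ι) : ¬ IsUnit (P * Q) := by
  obtain ⟨γ, x, hx, hne, hzero⟩ := hQ.hasHomogKernel_of_card_lt hcard
  exact fun hunit => not_hasHomogKernel_of_isUnit hunit
    ⟨γ, x, hx, hne, by rw [← mulVec_mulVec, hzero, mulVec_zero]⟩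

end DivisionRing

end GradedLinearAlgebra

section SingularMatrices

variable {Γ : Type u} [Group Γ] {R : Type v} [Ring R] {K : Type w} [Ring K]
  {𝒜 : Γ → AddSubgroup R} {𝒦 : Γ → AddSubgroup K} {φ : R →+* K} {ι κ : Type*}

lemma HasDistribution.map {A : Matrix ι κ R} {α : ι → Γ} {β : κ → Γ}
    (hA : HasDistribution 𝒜 A α β) (hφ : ∀ {γ r}, r ∈ 𝒜 γ → φ r ∈ 𝒦 γ) :
    HasDistribution 𝒦 (A.map φ) α β :=
  fun i j => hφ (hA i j)

lemma IsColSum.map {A B C : Matrix ι κ R} {c : κ} (h : IsColSum A B C c) :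
    IsColSum (A.map φ) (B.map φ) (C.map φ) c :=
  ⟨fun i j hj => (h.1 i j hj).imp (congrArg φ) (congrArg φ), fun i => by simp [h.2]⟩

lemma IsHomogDetSum.map {A B C : Matrix ι κ R} (h : IsHomogDetSum 𝒜 A B C)
    (hφ : ∀ {γ r}, r ∈ 𝒜 γ → φ r ∈ 𝒦 γ) :
    IsHomogDetSum 𝒦 (A.map φ) (B.map φ) (C.map φ) := by
  obtain ⟨⟨α, β, hA, hB⟩, h⟩ := h
  exact ⟨⟨α, β, hA.map hφ, hB.map hφ⟩, h.imp (fun ⟨c, h⟩ => ⟨c, h.map⟩) fun ⟨r, h⟩ => ⟨r, h.map⟩⟩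

section Submatrix

variable {ι κ : Type*} [Fintype ι] [DecidableEq ι] [Fintype κ] [DecidableEq κ]

lemma isUnit_submatrix {A : Matrix ι ι K} (hA : IsUnit A) (e f : κ ≃ ι) :
    IsUnit (A.submatrix e f) := by
  obtain ⟨⟨A, B, hAB, hBA⟩, rfl⟩ := hA
  exact ⟨⟨A.submatrix e f, B.submatrix f e, by simp [hAB], by simp [hBA]⟩, rfl⟩

lemma isUnit_submatrix_iff {A : Matrix ι ι K} (e f : κ ≃ ι) :
    IsUnit (A.submatrix e f) ↔ IsUnit A :=
  ⟨fun h => by simpa using isUnit_submatrix h e.symm f.symm, (isUnit_submatrix · e f)⟩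

end Submatrix

lemma isUnit_diagSum_iff [IsGrDivisionRing 𝒦] {m n : ℕ} {A : Matrix (Fin m) (Fin m) K}
    {B : Matrix (Fin n) (Fin n) K} (hA : IsHomogSq 𝒦 A) (hB : IsHomogSq 𝒦 B) :
    IsUnit (diagSum A B) ↔ IsUnit A ∧ IsUnit B := by
  obtain ⟨α, β, hA⟩ := hA
  obtain ⟨α', β', hB⟩ := hB
  rw [diagSum, reindex_apply, isUnit_submatrix_iff,
    (HasDistribution.blockDiag hA hB).isUnit_iff, hasHomogKernel_fromBlocks_iff, not_or,
    HasDistribution.isUnit_iff hA, HasDistribution.isUnit_iff hB]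

variable (𝒜 φ) in
/-- The singular kernel of `φ`: the homogeneous square matrices that do not become invertible. -/
def singularMatrices : Set (SqMat R) :=
  {p | IsHomogSq 𝒜 p.2 ∧ ¬ IsUnit (p.2.map φ)}

lemma diagSum_map {m n : ℕ} (A : Matrix (Fin m) (Fin m) R) (B : Matrix (Fin n) (Fin n) R) :
    (diagSum A B).map φ = diagSum (A.map φ) (B.map φ) := by
  rw [diagSum, reindex_apply, ← submatrix_map, fromBlocks_map, Matrix.map_zero _ (map_zero φ),
    Matrix.map_zero _ (map_zero φ)]
  rfl

lemma isGrPrimeMatrixIdeal_singularMatrices [IsGrDivisionRing 𝒦]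
    (hφ : ∀ {γ r}, r ∈ 𝒜 γ → φ r ∈ 𝒦 γ) :
    IsGrPrimeMatrixIdeal 𝒜 (singularMatrices 𝒜 φ) := by
  have hmap {n : ℕ} {A : Matrix (Fin n) (Fin n) R} (hA : IsHomogSq 𝒜 A) :
      IsHomogSq 𝒦 (A.map φ) :=
    hA.imp fun _ => Exists.imp fun _ hA => HasDistribution.map hA hφ
  have hdiag {m n : ℕ} {A : Matrix (Fin m) (Fin m) R} {B : Matrix (Fin n) (Fin n) R}
      (hA : IsHomogSq 𝒜 A) (hB : IsHomogSq 𝒜 B) :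
      IsUnit ((diagSum A B).map φ) ↔ IsUnit (A.map φ) ∧ IsUnit (B.map φ) := by
    rw [diagSum_map, isUnit_diagSum_iff (hmap hA) (hmap hB)]
  constructor
  case subset_homog => exact fun p hp => hp.1
  case pm1 =>
    refine fun {n} A hA hfull => ⟨hA, ?_⟩
    unfold IsGrFull at hfull
    push Not at hfull
    obtain ⟨r, P, Q, α, lam, β, -, hQ, rfl, hr⟩ := hfull
    simpa [Matrix.map_mul] using
      (HasDistribution.map hQ hφ).not_isUnit_mul (P.map φ) (by simpa using hr)
  case pm2 =>
    exact fun A B C hA hB h =>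
      ⟨h.isHomogSq, ((grDetSum_iff.1 h).map hφ).not_isUnit hA.2 hB.2⟩
  case pm3 =>
    exact fun A B hA hB => ⟨hA.1.diagSum hB, fun h => hA.2 ((hdiag hA.1 hB).1 h).1⟩
  case pm4 =>
    intro m n A B hA hB h
    by_contra! hnot
    have hAu := not_not.1 fun hu => hnot.1 ⟨hA, hu⟩
    have hBu := not_not.1 fun hu => hnot.2 ⟨hB, hu⟩
    exact h.2 ((hdiag hA hB).2 ⟨hAu, hBu⟩)
  case pm5 => exact fun h => h.2 (by simp [Matrix.map_one])
  case pm6 =>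
    exact fun A e f hA => ⟨hA.1.submatrix e f, fun h =>
      hA.2 ((isUnit_submatrix_iff e f).1 h)⟩

end SingularMatrices

section PrimeIdeal

variable {Γ : Type u} [Group Γ] {R : Type v} [Ring R] {𝒜 : Γ → AddSubgroup R}
  {W I : Set (SqMat R)}

lemma IsDetSumOf.mem_of_subset {p : SqMat R} (h : IsDetSumOf 𝒜 W p)
    (hI : IsGrMatrixPreideal 𝒜 I) (hWI : W ⊆ I) : p ∈ I := by
  induction h with
  | base p hp => exact hWI hp
  | step A B C _ _ h hA hB => exact hI.detSum_mem A B C hA hB h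

namespace IsGrPrimeMatrixIdeal

variable [IsMulGraded 𝒜]

/-- The classes of the homogeneous square matrices outside a gr-prime matrix ideal. -/
def complClasses (hI : IsGrPrimeMatrixIdeal 𝒜 I) : AddSubmonoid (PermClass R) where
  carrier := {c | ∃ p : SqMat R, IsHomogSq 𝒜 p.2 ∧ p ∉ I ∧ permClass p = c}
  zero_mem' := ⟨⟨0, 1⟩, ⟨1, 1, HasDistribution.one⟩, fun h => hI.not_matMem_one ⟨_, h, .refl _⟩,
    permClass_eq_zero _ rfl⟩
  add_mem' := by
    rintro _ _ ⟨p, hp, hpI, rfl⟩ ⟨q, hq, hqI, rfl⟩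
    exact ⟨⟨_, diagSum p.2 q.2⟩, hp.diagSum hq, fun h => (hI.pm4 _ _ hp hq h).elim hpI hqI, rfl⟩

lemma diagSum_diagIter_one_notMem (hI : IsGrPrimeMatrixIdeal 𝒜 I) {P : SqMat R}
    (hP : IsHomogSq 𝒜 P.2) (hPI : P ∉ I) (r m : ℕ) :
    (⟨P.1 * r + m, diagSum (diagIter P.2 r) 1⟩ : SqMat R) ∉ I := by
  have hPmem : permClass P ∈ hI.complClasses := ⟨P, hP, hPI, rfl⟩
  have honemem : permClass ⟨1, 1⟩ ∈ hI.complClasses :=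
    ⟨⟨1, 1⟩, ⟨1, 1, HasDistribution.one⟩, hI.pm5, rfl⟩
  have hmem : permClass ⟨P.1 * r + m, diagSum (diagIter P.2 r) 1⟩ ∈ hI.complClasses := by
    rw [permClass_diagSum, permClass_diagIter, permClass_one]
    exact add_mem (nsmul_mem hPmem r) (nsmul_mem honemem m)
  obtain ⟨q, -, hqI, hq⟩ := hmem
  exact fun h => hqI (hI.isGrMatrixPreideal.mem_of_permClass_eq h hq)

theorem not_isDetSumOf (hI : IsGrPrimeMatrixIdeal 𝒜 I) {P Q : SqMat R} (hP : IsHomogSq 𝒜 P.2)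
    (hPI : P ∉ I) (hQI : Q ∈ I) (r m : ℕ) :
    ¬ IsDetSumOf 𝒜 ({p | IsHomogSq 𝒜 p.2 ∧ ¬ IsGrFull 𝒜 p.2} ∪ diagMultiples 𝒜 Q)
      ⟨P.1 * r + m, diagSum (diagIter P.2 r) 1⟩ := by
  refine fun h => hI.diagSum_diagIter_one_notMem hP hPI r m
    (h.mem_of_subset hI.isGrMatrixPreideal (Set.union_subset ?_ ?_))
  · exact fun p hp => hI.pm1 p.2 hp.1 hp.2
  · rintro p ⟨c, hc, hp⟩
    exact hI.isGrMatrixPreideal.mem_of_permClass_eq_add hQI hc hp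

end IsGrPrimeMatrixIdeal

end PrimeIdeal

/-! ### Images of matrices in the ring of fractions -/

section Minors

variable {Γ : Type*} [Group Γ] {K : Type*} [Ring K] {𝒦 : Γ → AddSubgroup K} [IsGrDivisionRing 𝒦]
  {ι κ : Type*} [Fintype κ]

lemma not_hasHomogKernel_of_mul_fromBlocks_eq_one {A : Matrix κ κ K}
    {B : Matrix κ Unit K} {C : Matrix Unit κ K} {D : Matrix Unit Unit K} [DecidableEq κ]
    {Y : Matrix (κ ⊕ Unit) (κ ⊕ Unit) K} {γ : Γ} {β : κ → Γ}
    (hC : HasDistribution 𝒦 C (fun _ => γ) β) (hY : Y * fromBlocks A B C D = 1)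
    (hcorner : Y (.inr ()) (.inr ()) ≠ 0) : ¬ HasHomogKernel 𝒦 A β := by
  rintro ⟨δ, x, hx, hne, hzero⟩
  have himage : fromBlocks A B C D *ᵥ Sum.elim x 0 =
      (Sum.elim 0 (C *ᵥ x) : κ ⊕ Unit → K) := by
    simp [fromBlocks_mulVec, hzero]
  have hpreimage : Y *ᵥ Sum.elim 0 (C *ᵥ x) = Sum.elim x 0 := by
    rw [← himage, mulVec_mulVec, hY, one_mulVec]
  have hprod : Y (.inr ()) (.inr ()) * (C *ᵥ x) () = 0 := by
    simpa [mulVec, dotProduct] using congrFun hpreimage (.inr ())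
  have hCx : C *ᵥ x = 0 := by
    ext
    by_contra hCx
    obtain ⟨s, -, hs⟩ := IsGrDivisionRing.exists_mul_eq_one
      (mem_homogVec.1 (hC.mulVec_mem_homogVec hx) ()) hCx
    exact hcorner (by rw [← mul_one (Y _ _), ← hs, ← mul_assoc, hprod, zero_mul])
  rw [hCx, Sum.elim_zero_zero, mulVec_zero] at hpreimage
  exact hne (congrArg (· ∘ Sum.inl) hpreimage.symm)

lemma HasDistribution.exists_isUnit_toBlocks₁₁ [Fintype ι] [DecidableEq ι] [DecidableEq κ]
    {A : Matrix ι ι K} {α β : ι → Γ} (hA : HasDistribution 𝒦 A α β) (hu : IsUnit A)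
    (f : κ ⊕ Unit ≃ ι) : ∃ e : κ ⊕ Unit ≃ ι, IsUnit (A.submatrix e f).toBlocks₁₁ := by
  obtain ⟨B, hBA⟩ := hu.exists_left_inv
  obtain ⟨i, hi⟩ : ∃ i, B (f (.inr ())) i ≠ 0 := by
    by_contra! hrow
    have hone : (1 : Matrix ι ι K) (f (.inr ())) (f (.inr ())) = 0 := by
      rw [← hBA, mul_apply]
      simp [hrow]
    exact IsGrDivisionRing.zero_ne_one 𝒦 (by simpa using hone.symm)
  let e := f.trans (Equiv.swap (f (.inr ())) i)
  have hblocks : HasDistribution 𝒦 (A.submatrix e f) (α ∘ e) (β ∘ f) := hA.submatrix e f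
  have hinv : B.submatrix f e * A.submatrix e f = 1 := by
    rw [submatrix_mul_equiv, hBA, submatrix_one_equiv]
  rw [← fromBlocks_toBlocks (A.submatrix e f)] at hinv
  have hminor : HasDistribution 𝒦 (A.submatrix e f).toBlocks₁₁ (α ∘ e ∘ .inl) (β ∘ f ∘ .inl) :=
    fun i j => hblocks (.inl i) (.inl j)
  refine ⟨e, hminor.isUnit_iff.2 (not_hasHomogKernel_of_mul_fromBlocks_eq_one
    (γ := α (e (.inr ()))) (fun _ j => hblocks (.inr ()) (.inl j)) hinv ?_)⟩
  simpa [e] using hi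

end Minors

section LocalizedMatrices

variable {Γ : Type u} [Group Γ] {R : Type v} [Ring R] {𝒜 : Γ → AddSubgroup R} {I : Set (SqMat R)}
variable {γ δ : Γ} {ι κ τ : Type*}

lemma HasDistribution.sum {α : ι → Γ} {β : κ → Γ} (s : Finset τ) {A : τ → Matrix ι κ R}
    (hA : ∀ t, HasDistribution 𝒜 (A t) α β) : HasDistribution 𝒜 (∑ t ∈ s, A t) α β := by
  intro i j
  rw [Matrix.sum_apply]
  exact sum_mem fun t _ => hA t i j

lemma GrFraction.col_apply_mem (u : GrFraction 𝒜 I γ ι) (i : ι) : u.col i () ∈ 𝒜 (u.rowDeg i) := by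
  simpa using u.col_hom i ()

variable [IsMulGraded 𝒜] [hI : Fact (IsGrPrimeMatrixIdeal 𝒜 I)]

namespace GrFraction

lemma isNull_add_neg_ofMem_iff [Finite ι] (u : GrFraction 𝒜 I γ ι) {r : R} (hr : r ∈ 𝒜 γ) :
    (u + -ofMem I hr).IsNull ↔
      MatMem I (fromBlocks u.den (-u.col) u.row (-(ofMem I hr).row)) := by
  let v := ofMem I hr
  let e : Unit ⊕ ι ⊕ Unit ≃ (ι ⊕ Unit) ⊕ Unit :=
    (Equiv.sumAssoc Unit ι Unit).symm.trans ((Equiv.sumComm Unit ι).sumCongr (Equiv.refl Unit))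
  let X : Matrix (ι ⊕ Unit) (ι ⊕ Unit) R := fromBlocks u.den (-u.col) u.row (-v.row)
  let T : Matrix Unit (ι ⊕ Unit) R := fromCols 0 1
  have hX : HasDistribution 𝒜 X (Sum.elim u.rowDeg fun _ => γ) (Sum.elim u.colDeg fun _ => 1) :=
    u.den_hom.fromBlocks u.col_hom.neg u.row_hom v.row_hom.neg
  have hT : HasDistribution 𝒜 T (fun _ => 1) (Sum.elim u.colDeg fun _ => 1) :=
    HasDistribution.zero.fromCols .one
  have hv : HasDistribution 𝒜 (fromRows 0 v.row : Matrix (ι ⊕ Unit) Unit R)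
      (Sum.elim u.rowDeg fun _ => γ) fun _ => 1 := HasDistribution.zero.fromRows v.row_hom
  have blocks : (u + -v).bordered.submatrix e e =
      fromBlocks 1 (0 + (1 : Matrix Unit Unit R) * T) (fromRows 0 v.row)
        (X + fromRows 0 v.row * T) := by
    ext (i | i | i) (j | j | j) <;> simp [e, T, X, v, bordered, ofMem]
  rw [IsNull, ← matMem_submatrix_iff e e, blocks,
    hI.out.matMem_fromBlocks_colOp_iff .one .zero hv hX hT,
    hI.out.matMem_fromBlocks_zero₁₂_iff .one hv hX, or_iff_right hI.out.not_matMem_one]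

variable [DecidableEq Γ]

lemma value_withRow_sum [Finite ι] (u : GrFraction 𝒜 I γ ι) (s : Finset τ)
    {f : τ → Matrix Unit ι R} (hf : ∀ t, HasDistribution 𝒜 (f t) (fun _ => δ) u.colDeg) :
    (u.withRow (∑ t ∈ s, f t) (.sum s hf)).value = ∑ t ∈ s, (u.withRow (f t) (hf t)).value := by
  classical
  cases nonempty_fintype ι
  induction s using Finset.induction_on with
  | empty => exact value_eq_zero_iff.2 (isNull_of_row_eq_zero rfl)
  | insert t s ht ih =>
    simp_rw [Finset.sum_insert ht, ← ih, ← value_add]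
    exact (u.intertwines_withRow_add (hf t) (.sum s hf)).value_eq rfl

section Column

variable [Finite ι]

/-- The fraction with denominator `1`, whose row selects the entry `i` of the column of `u`. -/
def colEntry [DecidableEq ι] (u : GrFraction 𝒜 I γ ι) (i : ι) :
    GrFraction 𝒜 I (u.rowDeg i) ι where
  den := 1
  row := (1 : Matrix ι ι R).submatrix (fun _ => i) id
  col := u.col
  rowDeg := u.rowDeg
  colDeg := u.rowDeg
  den_hom := .one
  row_hom := HasDistribution.one.submatrix (fun _ => i) id
  col_hom := u.col_hom
  den_notMem := hI.out.not_matMem_one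

lemma value_colEntry [DecidableEq ι] (u : GrFraction 𝒜 I γ ι) (i : ι) :
    (u.colEntry i).value = (ofMem I (u.col_apply_mem i)).value := by
  cases nonempty_fintype ι
  refine Eq.symm (Intertwines.value_eq ⟨u.col, u.col, u.col_hom, u.col_hom, ?_, ?_, ?_⟩ rfl)
  · simp [colEntry, ofMem]
  · ext
    simp [colEntry, ofMem, mul_apply, one_apply]
  · simp [colEntry, ofMem]

lemma value_withRow_den (u : GrFraction 𝒜 I γ ι) (i : ι) :
    (u.withRow (u.den.submatrix (fun _ => i) id) (u.den_hom.submatrix (fun _ => i) id)).value =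
      (ofMem I (u.col_apply_mem i)).value := by
  classical
  cases nonempty_fintype ι
  rw [← value_colEntry]
  refine Intertwines.value_eq ⟨1, u.den, .one, u.den_hom, ?_, ?_, ?_⟩ rfl
  · simp [colEntry, withRow]
  · ext _ k
    simp [colEntry, withRow, mul_apply, one_apply]
  · simp [colEntry, withRow]

open scoped Classical in
/-- The entry `j` of the column `u.den⁻¹ * u.col`. -/
noncomputable def coord (u : GrFraction 𝒜 I γ ι) (j : ι) : GrFractionRing 𝒜 I :=
  (u.withRow ((1 : Matrix ι ι R).submatrix (fun _ => j) id)
    (HasDistribution.one.submatrix (fun _ => j) id)).value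

lemma coord_mem (u : GrFraction 𝒜 I γ ι) (j : ι) :
    u.coord j ∈ GrFractionRing.component 𝒜 I (u.colDeg j) :=
  GrFractionRing.value_mem_component _

end Column

section Hom

variable [Fintype ι] {φ : R →+* GrFractionRing 𝒜 I}

lemma value_eq_sum (hφ : ∀ {γ r} (hr : r ∈ 𝒜 γ), φ r = (ofMem I hr).value)
    (u : GrFraction 𝒜 I γ ι) : u.value = ∑ j, φ (u.row () j) * u.coord j := by
  classical
  let e (j : ι) : Matrix Unit ι R := (1 : Matrix ι ι R).submatrix (fun _ => j) id
  have he (j : ι) : HasDistribution 𝒜 (u.row () j • e j) (fun _ => γ) u.colDeg := by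
    intro i k
    rcases eq_or_ne j k with rfl | hjk
    · simpa [e, one_apply] using u.row_hom () j
    · simp [e, one_apply, hjk]
  have hrow : u.row = ∑ j, u.row () j • e j := by
    ext _ k
    simp [e, Matrix.sum_apply, one_apply]
  calc u.value = (u.withRow (∑ j, u.row () j • e j) (.sum _ he)).value := by
        congr 1
        cases u
        simp only [withRow, GrFraction.mk.injEq]
        simpa using hrow
    _ = ∑ j, (u.withRow (u.row () j • e j) (he j)).value := u.value_withRow_sum _ he
    _ = ∑ j, φ (u.row () j) * u.coord j := Finset.sum_congr rfl fun j _ => by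
        rw [hφ (u.row_hom () j), coord, ← value_mul]
        exact ((u.withRow (e j) (HasDistribution.one.submatrix _ id)).withRow_intertwines_ofMem_mul
          (u.row_hom () j) (he j) rfl).value_eq (by simp)

lemma map_den_mulVec_coord (hφ : ∀ {γ r} (hr : r ∈ 𝒜 γ), φ r = (ofMem I hr).value)
    (u : GrFraction 𝒜 I γ ι) : u.den.map φ *ᵥ u.coord = fun i => φ (u.col i ()) := by
  ext i : 1
  rw [hφ (u.col_apply_mem i), ← value_withRow_den, value_eq_sum hφ]
  rfl

end Hom

end GrFraction

namespace GrFractionRing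

open GrFraction

variable [DecidableEq Γ] {φ : R →+* GrFractionRing 𝒜 I}

theorem isUnit_map_of_not_matMem [Fintype ι] [DecidableEq ι]
    (hφ : ∀ {γ r} (hr : r ∈ 𝒜 γ), φ r = (ofMem I hr).value) {A : Matrix ι ι R} {α β : ι → Γ}
    (hA : HasDistribution 𝒜 A α β) (hAI : ¬ MatMem I A) : IsUnit (A.map φ) := by
  let u (k : ι) : GrFraction 𝒜 I 1 ι :=
    { den := A
      row := 0
      col := of fun i _ => (1 : Matrix ι ι R) i k
      rowDeg i := α i * (α k)⁻¹
      colDeg j := β j * (α k)⁻¹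
      den_hom := hA.mul_right _
      row_hom := .zero
      col_hom i _ := by simpa using HasDistribution.one (α := α) i k
      den_notMem := hAI }
  have hB : HasDistribution (component 𝒜 I) (of fun j k => (u k).coord j) β α :=
    fun j k => (u k).coord_mem j
  refine hB.isUnit_of_mul_eq_one ?_
  ext i k : 1
  refine (congrFun (map_den_mulVec_coord hφ (u k)) i).trans ?_
  simp [u, one_apply, apply_ite φ]

lemma hasHomogKernel_map_of_matMem_fromBlocks [Fintype ι]
    (hφ : ∀ {γ r} (hr : r ∈ 𝒜 γ), φ r = (ofMem I hr).value) {A : Matrix ι ι R}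
    {B : Matrix ι Unit R} {C : Matrix Unit ι R} {D : Matrix Unit Unit R} {α β : ι → Γ}
    (hA : HasDistribution 𝒜 A α β) (hB : HasDistribution 𝒜 B α fun _ => δ)
    (hC : HasDistribution 𝒜 C (fun _ => γ) β)
    (hD : HasDistribution 𝒜 D (fun _ => γ) fun _ => δ) (hAI : ¬ MatMem I A)
    (hmem : MatMem I (fromBlocks A B C D)) :
    HasHomogKernel (component 𝒜 I) ((fromBlocks A B C D).map φ) (Sum.elim β fun _ => δ) := by
  have hd : -D () () ∈ 𝒜 (γ * δ⁻¹) := neg_mem (hD () ())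
  let u : GrFraction 𝒜 I (γ * δ⁻¹) ι :=
    { den := A
      row := C
      col := -B
      rowDeg i := α i * δ⁻¹
      colDeg j := β j * δ⁻¹
      den_hom := hA.mul_right _
      row_hom := hC.mul_right _
      col_hom := by simpa using (hB.mul_right δ⁻¹).neg
      den_notMem := hAI }
  have hnull : (u + -ofMem I hd).IsNull := by
    rw [isNull_add_neg_ofMem_iff]
    convert hmem using 2
    · exact neg_neg B
    · ext
      simp [ofMem]
  have hcol : A.map φ *ᵥ u.coord = fun i => -φ (B i ()) := by
    simpa [u] using map_den_mulVec_coord hφ u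
  have hrow : ∑ j, φ (C () j) * u.coord j = -φ (D () ()) := by
    rw [← value_eq_zero_iff, value_add, value_neg, ← hφ, add_neg_eq_zero, value_eq_sum hφ] at hnull
    rw [hnull, map_neg]
  refine ⟨δ⁻¹, Sum.elim u.coord 1, mem_homogVec.2 (Sum.forall.2 ⟨u.coord_mem, fun _ => ?_⟩),
    fun h => ?_, ?_⟩
  · simpa using IsMulGraded.one_mem (𝒜 := component 𝒜 I)
  · exact IsGrDivisionRing.zero_ne_one (component 𝒜 I) (congrFun h (.inr ())).symm
  · rw [fromBlocks_map, fromBlocks_mulVec, Sum.elim_comp_inl, Sum.elim_comp_inr, hcol,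
      ← Sum.elim_zero_zero, Sum.elim_eq_iff]
    refine ⟨funext fun i => ?_, funext fun _ => (congrArg (· + _) hrow).trans ?_⟩ <;>
      simp [mulVec, dotProduct]

theorem not_isUnit_map_of_matMem {n : ℕ}
    (hφ : ∀ {γ r} (hr : r ∈ 𝒜 γ), φ r = (ofMem I hr).value) {A : Matrix (Fin n) (Fin n) R}
    {α β : Fin n → Γ} (hA : HasDistribution 𝒜 A α β) (hAI : MatMem I A) :
    ¬ IsUnit (A.map φ) := by
  induction n with
  | zero => exact fun _ => hI.out.not_matMem_one (Subsingleton.elim A 1 ▸ hAI)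
  | succ n ih =>
    intro hu
    let f : Fin n ⊕ Unit ≃ Fin (n + 1) :=
      (finSuccEquivLast.trans (Equiv.optionEquivSumPUnit _)).symm
    have hφA : HasDistribution (component 𝒜 I) (A.map φ) α β := hA.map fun hr =>
      hφ hr ▸ value_mem_component _
    obtain ⟨e, he⟩ := hφA.exists_isUnit_toBlocks₁₁ hu f
    let X := A.submatrix e f
    have hX : HasDistribution 𝒜 X (α ∘ e) (β ∘ f) := hA.submatrix e f
    have hX₁₁ : HasDistribution 𝒜 X.toBlocks₁₁ (α ∘ e ∘ .inl) (β ∘ f ∘ .inl) :=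
      fun i j => hX (.inl i) (.inl j)
    have hXI : MatMem I (fromBlocks X.toBlocks₁₁ X.toBlocks₁₂ X.toBlocks₂₁ X.toBlocks₂₂) := by
      rwa [fromBlocks_toBlocks, matMem_submatrix_iff]
    have hker := hasHomogKernel_map_of_matMem_fromBlocks hφ (B := X.toBlocks₁₂)
      (C := X.toBlocks₂₁) (D := X.toBlocks₂₂) (δ := β (f (.inr ()))) (γ := α (e (.inr ())))
      hX₁₁ (fun i _ => hX (.inl i) (.inr ())) (fun _ j => hX (.inr ()) (.inl j))
      (fun _ _ => hX (.inr ()) (.inr ())) (fun h => ih hX₁₁ h he) hXI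
    rw [fromBlocks_toBlocks] at hker
    suffices h : HasHomogKernel (component 𝒜 I) (A.map φ) β from
      not_hasHomogKernel_of_isUnit hu h
    refine .of_submatrix (e := e) (f := f) ?_
    rw [← Sum.elim_comp_inl_inr (β ∘ f)]
    exact hker

end GrFractionRing

end LocalizedMatrices

namespace GrDivRingHom

variable {Γ : Type u} [Group Γ] [DecidableEq Γ] {R : Type v} [Ring R] {𝒜 : Γ → AddSubgroup R}

instance (d : GrDivRingHom Γ R 𝒜) : IsMulGraded d.grading where
  one_mem := d.one_mem
  mul_mem := d.mul_mem

instance (d : GrDivRingHom Γ R 𝒜) : IsGrDivisionRing d.grading where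
  zero_ne_one := zero_ne_one
  exists_mul_eq_one hx hne :=
    IsMulGraded.exists_mem_mul_eq_one d.internal hx (d.isUnit_of_ne hx hne)

lemma exists_isUnit_map_iff_notMem [IsMulGraded 𝒜] {I : Set (SqMat R)}
    (hI : IsGrPrimeMatrixIdeal 𝒜 I) (h : DirectSum.IsInternal 𝒜) :
    ∃ d : GrDivRingHom Γ R 𝒜, ∀ {n : ℕ} {A : Matrix (Fin n) (Fin n) R},
      IsHomogSq 𝒜 A → (IsUnit (A.map d.φ) ↔ ⟨n, A⟩ ∉ I) := by
  have : Fact (IsGrPrimeMatrixIdeal 𝒜 I) := ⟨hI⟩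
  obtain ⟨φ, hφ⟩ := GrFractionRing.exists_ringHom_eq_value 𝒜 I h
  let d : GrDivRingHom Γ R 𝒜 :=
    { K := GrFractionRing 𝒜 I
      nontrivialK := ⟨0, 1, IsGrDivisionRing.zero_ne_one (GrFractionRing.component 𝒜 I)⟩
      grading := GrFractionRing.component 𝒜 I
      internal := GrFractionRing.isInternal_component
      one_mem := IsMulGraded.one_mem
      mul_mem := IsMulGraded.mul_mem
      isUnit_of_ne := IsGrDivisionRing.isUnit
      φ := φ
      map_mem := fun hr => hφ hr ▸ GrFractionRing.value_mem_component _ }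
  refine ⟨d, fun {n A} ⟨α, β, hA⟩ => ?_⟩
  have hmem : MatMem I A ↔ ⟨n, A⟩ ∈ I :=
    hI.isGrMatrixPreideal.matMem_iff_submatrix_mem (.refl _) (.refl _)
  rw [← hmem]
  exact ⟨fun hu hAI => GrFractionRing.not_isUnit_map_of_matMem hφ hA hAI hu,
    GrFractionRing.isUnit_map_of_not_matMem hφ hA⟩

end GrDivRingHom

/-- Let `R` be a `Γ`-graded ring and let `P`, `Q` be square
homogeneous matrices over `R`.  There exist a `Γ`-graded division ring `K` and a
homomorphism of `Γ`-graded rings `φ : R → K` such that `P^φ` is invertible over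
`K` and `Q^φ` is not, if and only if no matrix of the form
`(P ⊕ ⋯ ⊕ P) ⊕ I_m` (with `r ≥ 1` copies of `P` and `m ≥ 0`) is an iterated
determinantal sum of matrices each of which is either a non-gr-full square
homogeneous matrix, or of the form `E (Q ⊕ A) F` for some `A ∈ 𝔐(R)` (possibly
absent) and permutation matrices `E`, `F`. -/
theorem exists_graded_hom_inverting_P_not_Q_iff
    {Γ : Type u} [Group Γ] [DecidableEq Γ] {R : Type v} [Ring R]
    (𝒜 : Γ → AddSubgroup R)
    (hinternal : DirectSum.IsInternal 𝒜)
    (hone : (1 : R) ∈ 𝒜 1)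
    (hmul : ∀ {γ δ : Γ} {x y : R}, x ∈ 𝒜 γ → y ∈ 𝒜 δ → x * y ∈ 𝒜 (γ * δ))
    {np nq : ℕ} (P : Matrix (Fin np) (Fin np) R) (Q : Matrix (Fin nq) (Fin nq) R)
    (hP : IsHomogSq 𝒜 P) (hQ : IsHomogSq 𝒜 Q) :
    (∃ d : GrDivRingHom Γ R 𝒜, IsUnit (P.map ⇑d.φ) ∧ ¬ IsUnit (Q.map ⇑d.φ)) ↔
      ∀ (r m : ℕ), 1 ≤ r →
        ¬ IsDetSumOf 𝒜
          ({p : SqMat R | IsHomogSq 𝒜 p.2 ∧ ¬ IsGrFull 𝒜 p.2} ∪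
            {p : SqMat R | ∃ (k : ℕ) (A : Matrix (Fin k) (Fin k) R)
                (e f : Equiv.Perm (Fin (nq + k))),
                IsHomogSq 𝒜 A ∧ p = ⟨nq + k, (diagSum Q A).submatrix ⇑e ⇑f⟩})
          (⟨np * r + m, diagSum (diagIter P r) (1 : Matrix (Fin m) (Fin m) R)⟩ :
            SqMat R) := by
  have : IsMulGraded 𝒜 := ⟨hone, hmul⟩
  rw [← diagMultiples_eq]
  constructor
  · rintro ⟨d, hPd, hQd⟩ r m -
    have hI := isGrPrimeMatrixIdeal_singularMatrices (φ := d.φ) (𝒦 := d.grading) d.map_mem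
    exact hI.not_isDetSumOf (P := ⟨np, P⟩) (Q := ⟨nq, Q⟩) hP (fun h => h.2 hPd) ⟨hQ, hQd⟩ r m
  · intro h
    obtain ⟨I, hI, hQI, hPI⟩ :=
      exists_isGrPrimeMatrixIdeal_mem_notMem (P := ⟨np, P⟩) (Q := ⟨nq, Q⟩) hP hQ h
    obtain ⟨d, hd⟩ := GrDivRingHom.exists_isUnit_map_iff_notMem hI hinternal
    exact ⟨d, (hd hP).2 hPI, fun hu => (hd hQ).1 hu hQI⟩
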